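/- Suppose a is contained in the Jacobson radical of R and M is an a-relative generalized Cohen-Macaulay R-module with c := cd(a,M) > 0. Then f_a(M) = λ_a(M), and cd(a, R/p) = c for every prime p ∈ Ass_R M \ V(a). -/

import Mathlib

/-!
Formalization of a statement from "A theory of relative generalized Cohen-Macaulay modules"
by Divaani-Aazar, Ghanbari Doust, Tousi and Zakeri.

Throughout, `R` is a commutative Noetherian ring and `M` a finitely generated `R`-module.
Conventions used below:
* `locH I i M` is the local cohomology module `H^i_I(M)` (Mathlib's `localCohomology`).
* Conditions `cd(I,M) = c`, `ara(I,M) = n`, `f_I(M) = f`, `grade(I,M) = r` are expressed by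
  the predicates `IsCd`, `IsAra`, `IsFinDim`, `IsGrade`.
* Sequences are given as functions `Fin r → R`; `pSpan M x i = ⟨x_0,…,x_{i-1}⟩M`.
* Koszul (co)homology is defined via the explicit (co)chain complex on the `p`-element
  subsets of `{0,…,n-1}`, and the canonical map `λ^i` into local cohomology is the structure
  map (at exponent 1) into the direct limit of Koszul cohomologies of powers of the sequence,
  which is the realization of `H^i_{⟨x⟩}(M)` used in the paper (2.1(iv)).
-/

open CategoryTheory

noncomputable section

variable {R : Type} [CommRing R]

/-! ### Local cohomology, cohomological dimension, arithmetic rank -/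

/-- The `i`-th local cohomology module `H^i_I(M)`. -/
abbrev locH (I : Ideal R) (i : ℕ) (M : Type) [AddCommGroup M] [Module R M] : ModuleCat R :=
  (localCohomology I i).obj (ModuleCat.of R M)

/-- `cd(I, M) = c`: the cohomological dimension of `I` on `M` equals `c`, i.e.
`H^c_I(M) ≠ 0` and `H^i_I(M) = 0` for all `i > c`. -/
def IsCd (I : Ideal R) (M : Type) [AddCommGroup M] [Module R M] (c : ℕ) : Prop :=
  Nontrivial (locH I c M) ∧ ∀ i : ℕ, c < i → Subsingleton (locH I i M)

/-- `f_I(M) = f`: the `I`-finiteness dimension of `M` equals `f`, i.e. `f` is the least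
integer such that `H^f_I(M)` is not finitely generated. -/
def IsFinDim (I : Ideal R) (M : Type) [AddCommGroup M] [Module R M] (f : ℕ) : Prop :=
  (∀ i : ℕ, i < f → Module.Finite R (locH I i M)) ∧ ¬ Module.Finite R (locH I f M)

/-- `M` is `I`-relative generalized Cohen-Macaulay: `cd(I,M) ≤ 0` or `cd(I,M) = f_I(M)`. -/
def IsRelGCM (I : Ideal R) (M : Type) [AddCommGroup M] [Module R M] : Prop :=
  (∀ i : ℕ, 0 < i → Subsingleton (locH I i M)) ∨
    ∃ c : ℕ, IsCd I M c ∧ IsFinDim I M c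

/-- `ara(I, M) = n`: the arithmetic rank of `I` with respect to `M` equals `n`, i.e. `n` is the
least integer such that there are `x_1, …, x_n ∈ R` with
`Rad(⟨x_1,…,x_n⟩ + Ann M) = Rad(I + Ann M)`. -/
def IsAra (I : Ideal R) (M : Type) [AddCommGroup M] [Module R M] (n : ℕ) : Prop :=
  IsLeast {k : ℕ | ∃ x : Fin k → R,
    (Ideal.span (Set.range x) + Module.annihilator R M).radical
      = (I + Module.annihilator R M).radical} n

/-- `x_1, …, x_c` is an `I`-relative system of parameters of `M` (where `c = cd(I,M)`):
the `x_i` lie in `I` and `Rad(⟨x_1,…,x_c⟩ + Ann M) = Rad(I + Ann M)`. -/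
def IsRsop (I : Ideal R) (M : Type) [AddCommGroup M] [Module R M] {c : ℕ}
    (x : Fin c → R) : Prop :=
  (∀ j, x j ∈ I) ∧
    (Ideal.span (Set.range x) + Module.annihilator R M).radical
      = (I + Module.annihilator R M).radical

/-! ### The natural maps `φ^i_M : Ext^i(R/I, M) → H^i_I(M)` and relative surjective
Buchsbaum modules -/

/-- The `i`-th Ext module `Ext^i_R(R/I, M)`. -/
abbrev extH (I : Ideal R) (i : ℕ) (M : Type) [AddCommGroup M] [Module R M] : ModuleCat R :=
  ((Ext R (ModuleCat R) i).obj (Opposite.op (ModuleCat.of R (R ⧸ I)))).obj (ModuleCat.of R M)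

/-- The natural map `φ^i_M : Ext^i_R(R/I, M) → H^i_I(M)`, i.e. the structure map into the
colimit `H^i_I(M) = colim_n Ext^i_R(R/I^n, M)` at `n = 1`. -/
def phi (I : Ideal R) (i : ℕ) (M : Type) [AddCommGroup M] [Module R M] :
    ((localCohomology.diagram (localCohomology.idealPowersDiagram I) i).obj
        (Opposite.op (Opposite.op (1 : ℕ)))).obj (ModuleCat.of R M) ⟶
      (localCohomology I i).obj (ModuleCat.of R M) :=
  have := localCohomology.hasColimitDiagram.{0, 0} (localCohomology.idealPowersDiagram I) i
  (Limits.colimit.ι (localCohomology.diagram (localCohomology.idealPowersDiagram I) i)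
      (Opposite.op (Opposite.op (1 : ℕ)))).app (ModuleCat.of R M)

/-- `φ^i_M` is surjective. -/
def PhiSurj (I : Ideal R) (i : ℕ) (M : Type) [AddCommGroup M] [Module R M] : Prop :=
  Function.Surjective (phi I i M)

/-- `M` is `I`-relative surjective Buchsbaum: `φ^i_M` is surjective for all `i < cd(I,M)`. -/
def IsRelSurjBuchsbaum (I : Ideal R) (M : Type) [AddCommGroup M] [Module R M] : Prop :=
  ∀ i : ℕ, (∃ j : ℕ, i < j ∧ Nontrivial (locH I j M)) → PhiSurj I i M

/-- `grade(I, M) = r`: `r` is the least integer with `Ext^r_R(R/I, M) ≠ 0`. -/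
def IsGrade (I : Ideal R) (M : Type) [AddCommGroup M] [Module R M] (r : ℕ) : Prop :=
  Nontrivial (extH I r M) ∧ ∀ i : ℕ, i < r → Subsingleton (extH I i M)

/-! ### Height, depth, `λ_I(M)`, the finiteness dimension as an extended natural number,
and Cohen-Macaulay modules over local rings -/

/-- The height of an ideal `I`: the infimum of the heights of the primes containing `I`. -/
noncomputable def idealHeight {S : Type} [CommRing S] (I : Ideal S) : ℕ∞ :=
  sInf {h : ℕ∞ | ∃ q : PrimeSpectrum S, I ≤ q.asIdeal ∧ h = Order.height q}

/-- The depth of a module `N` over a local ring `A`, characterized à la Rees as the least `k`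
with `Ext^k_A(A/m, N) ≠ 0`. -/
noncomputable def depthE (A : Type) [CommRing A] [IsLocalRing A] (N : Type) [AddCommGroup N]
    [Module A N] : ℕ∞ :=
  sInf {d : ℕ∞ | ∃ k : ℕ, d = (k : ℕ∞) ∧
    Nontrivial (extH (IsLocalRing.maximalIdeal A) k N)}

/-- The (Krull) dimension of a module `N` over a ring `A`, as the Krull dimension of
`A / Ann_A N`. -/
noncomputable def dimE (A : Type) [CommRing A] (N : Type) [AddCommGroup N] [Module A N] :
    WithBot ℕ∞ :=
  ringKrullDim (A ⧸ Module.annihilator A N)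

/-- A module `N` over a local ring `A` is Cohen-Macaulay if `depth N = dim N`. -/
def IsCMMod (A : Type) [CommRing A] [IsLocalRing A] (N : Type) [AddCommGroup N]
    [Module A N] : Prop :=
  (depthE A N : WithBot ℕ∞) = dimE A N

/-- The `I`-finiteness dimension `f_I(M)`, as an extended natural number. -/
noncomputable def finDimNE (I : Ideal R) (M : Type) [AddCommGroup M] [Module R M] : ℕ∞ :=
  sInf {d : ℕ∞ | ∃ k : ℕ, d = (k : ℕ∞) ∧ ¬ Module.Finite R (locH I k M)}

/-- `λ_I(M) := inf { depth M_p + ht((I+p)/p) | p ∈ Spec R \ V(I) }`. -/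
noncomputable def lambdaNE (I : Ideal R) (M : Type) [AddCommGroup M] [Module R M] : ℕ∞ :=
  sInf {d : ℕ∞ | ∃ p : PrimeSpectrum R, ¬ I ≤ p.asIdeal ∧
    d = depthE (Localization.AtPrime p.asIdeal) (LocalizedModule p.asIdeal.primeCompl M)
        + idealHeight (Ideal.map (Ideal.Quotient.mk p.asIdeal) I)}

/-!
Let `p` be a prime outside `V(I)` and `q ⊇ p` a prime containing `I`. If `H^i_I(M)` is finitely
generated for `i < c`, then it is killed by a power of `I`, and dimension shifting along
`M`-regular elements, chosen so that `p` extends to an associated prime of `M/xM` strictly above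
it but still outside `V(I)`, produces a chain of `c - depth M_p` strict inclusions from `p` up
to `q`; hence `c ≤ λ_I(M)`.

Conversely, local cohomology above degree `c` only depends on supports, so `H^i_I(R/p) = 0` for
`i > c` whenever `p` is associated to `M`. For `q` minimal over `I + p`, the localization at `q` of
the top cohomology of `R/p` is Artinian, so some `x ∈ I` acts surjectively on it and dividing by
`x` lowers the cohomological dimension; by induction no chain of primes from `p` to `q` is
longer than the cohomological dimension of `R/p`. An associated prime `p` outside `V(I)` has
`depth M_p = 0`, so comparing the two bounds gives both `ht((I + p)/p) = c` and `cd(I, R/p) = c`.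
-/

open scoped Pointwise

section ExtComparison

variable {A C : Type*} [CommRing A] [Category* C] [Abelian C] [Linear A C]
  {X X' : C} {P : ProjectiveResolution X} {P' : ProjectiveResolution X'} {Y Y' : C} {n : ℕ}

variable (A) in
/-- The `n`-cocycles of `Hom(P, Y)`, for a projective resolution `P` of `X`. They map onto
`Ext^n(X, Y)` in each of its two versions, which is how the versions are compared. -/
def extCocycles (P : ProjectiveResolution X) (Y : C) (n : ℕ) : Submodule A (P.complex.X n ⟶ Y) :=
  LinearMap.ker (Linear.leftComp A Y (P.complex.d (n + 1) n))

@[simp]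
lemma mem_extCocycles {z : P.complex.X n ⟶ Y} :
    z ∈ extCocycles A P Y n ↔ P.complex.d (n + 1) n ≫ z = 0 := Iff.rfl

lemma extCocycles_comp (z : extCocycles A P Y n) (f : Y ⟶ Y') :
    z.1 ≫ f ∈ extCocycles A P Y' n := by
  rw [mem_extCocycles, ← Category.assoc, mem_extCocycles.1 z.2, Limits.zero_comp]

lemma comp_extCocycles (φ : P'.complex ⟶ P.complex) (z : extCocycles A P Y n) :
    φ.f n ≫ z.1 ∈ extCocycles A P' Y n := by
  rw [mem_extCocycles, ← φ.comm_assoc, mem_extCocycles.1 z.2, Limits.comp_zero]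

namespace extCocycles

section AbelianExt

variable [HasExt C]

variable (A P Y n) in
/-- The class of a cocycle in `Abelian.Ext X Y n`. -/
def toExt : extCocycles A P Y n →ₗ[A] Abelian.Ext X Y n where
  toFun z := P.extMk z.1 (n + 1) rfl (mem_extCocycles.1 z.2)
  map_add' a b := (P.add_extMk _ _ _ _ (mem_extCocycles.1 a.2) (mem_extCocycles.1 b.2)).symm
  map_smul' r a := by
    rw [RingHom.id_apply, Abelian.Ext.smul_eq_comp_mk₀, P.extMk_comp_mk₀]
    congr 1
    simp

lemma toExt_surjective : Function.Surjective (toExt A P Y n) := fun e =>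
  let ⟨z, hz, h⟩ := P.extMk_surjective e (n + 1) rfl
  ⟨⟨z, hz⟩, h⟩

lemma eq_zero_of_extMk_eq_zero (z : P.complex.X 0 ⟶ Y)
    (hz : P.complex.d 1 0 ≫ z = 0) (h : P.extMk z 1 rfl hz = 0) : z = 0 := by
  replace h := congrArg P.extEquivCohomologyClass h
  rw [ProjectiveResolution.extEquivCohomologyClass_extMk,
    ProjectiveResolution.extEquivCohomologyClass_zero,
    CochainComplex.HomComplex.CohomologyClass.mk_eq_zero_iff,
    CochainComplex.HomComplex.Cocycle.toSingleMk_mem_coboundaries_iff _ _ _ _ _ 1 (by simp)] at h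
  obtain ⟨g, hg⟩ := h
  have hX : Limits.IsZero (P.cochainComplex.X 1) :=
    P.cochainComplex.isZero_of_isStrictlyLE 0 1 (by simp)
  rw [hX.eq_of_src g 0, Limits.comp_zero] at hg
  rw [← cancel_epi (P.cochainComplexXIso (-((0 : ℕ) : ℤ)) 0 rfl).hom, ← hg, Limits.comp_zero]

lemma toExt_eq_zero_iff (z : extCocycles A P Y n) :
    toExt A P Y n z = 0 ↔ ∃ w, P.complex.d n ((ComplexShape.down ℕ).next n) ≫ w = z.1 := by
  rcases n with _ | n
  · rw [P.complex.shape _ _ (by simp)]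
    simp only [Limits.zero_comp, exists_const]
    refine ⟨fun h => (eq_zero_of_extMk_eq_zero z.1 (mem_extCocycles.1 z.2) h).symm, fun h => ?_⟩
    rw [show z = 0 from Subtype.ext h.symm, map_zero]
  · rw [show (ComplexShape.down ℕ).next (n + 1) = n by simp]
    exact P.extMk_eq_zero_iff z.1 _ rfl z.2 n rfl

lemma toExt_naturality_left {g : X' ⟶ X} (φ : ProjectiveResolution.Hom P' P g)
    (z : extCocycles A P Y n) :
    toExt A P' Y n ⟨φ.hom.f n ≫ z.1, comp_extCocycles φ.hom z⟩ =
      (Abelian.Ext.mk₀ g).comp (toExt A P Y n z) (zero_add n) :=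
  (P.mk₀_comp_extMk (R' := P') z.1 (n + 1) rfl z.2 φ).symm

lemma toExt_naturality_right (z : extCocycles A P Y n) (f : Y ⟶ Y') :
    toExt A P Y' n ⟨z.1 ≫ f, extCocycles_comp z f⟩ =
      (toExt A P Y n z).comp (Abelian.Ext.mk₀ f) (add_zero n) :=
  (P.extMk_comp_mk₀ z.1 (n + 1) rfl z.2 f).symm

end AbelianExt

section DerivedExt

variable (A P Y) in
/-- The complex `Hom(P, Y)`, in the opposite category because that is where the derived functor
behind `Ext` is computed. -/
abbrev opHomComplex : ChainComplex (ModuleCat A)ᵒᵖ ℕ :=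
  (((linearYoneda A C).obj Y).rightOp.mapHomologicalComplex _).obj P.complex

variable (A P Y n) in
/-- The inclusion of the cocycles of `Hom(P, Y)`, taken in the sense of homological complexes,
into `Hom(P_n, Y)`. -/
def opcyclesIncl : ((opHomComplex A P Y).opcycles n).unop →ₗ[A] (P.complex.X n ⟶ Y) :=
  ((opHomComplex A P Y).pOpcycles n).unop.hom

lemma opcyclesIncl_injective : Function.Injective (opcyclesIncl A P Y n) :=
  (ModuleCat.mono_iff_injective ((opHomComplex A P Y).pOpcycles n).unop).1 inferInstance

lemma range_opcyclesIncl : LinearMap.range (opcyclesIncl A P Y n) = extCocycles A P Y n := by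
  have hexact : (ShortComplex.mk _ _ ((opHomComplex A P Y).d_pOpcycles (n + 1) n)).Exact :=
    ShortComplex.exact_of_g_is_cokernel _
      ((opHomComplex A P Y).opcyclesIsCokernel (n + 1) n (by simp))
  exact hexact.unop.moduleCat_range_eq_ker

lemma opcyclesIncl_fromOpcycles {j : ℕ} (w : P.complex.X j ⟶ Y) :
    opcyclesIncl A P Y n (((opHomComplex A P Y).fromOpcycles n j).unop.hom w) =
      P.complex.d n j ≫ w :=
  congrArg (fun f => f.unop.hom w) ((opHomComplex A P Y).p_fromOpcycles n j)

variable (A P Y n) in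
/-- The two notions of cocycle of `Hom(P, Y)` agree. -/
def opcyclesEquiv : ((opHomComplex A P Y).opcycles n).unop ≃ₗ[A] extCocycles A P Y n :=
  LinearEquiv.ofInjective _ opcyclesIncl_injective ≪≫ₗ LinearEquiv.ofEq _ _ range_opcyclesIncl

lemma coe_opcyclesEquiv (o) : (opcyclesEquiv A P Y n o : P.complex.X n ⟶ Y) =
    opcyclesIncl A P Y n o := rfl

variable [EnoughProjectives C]

variable (A P Y n) in
/-- The isomorphism computing the derived functor from `P`. -/
def derivedIso : (((linearYoneda A C).obj Y).rightOp.leftDerived n).obj X ≅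
    (opHomComplex A P Y).homology n :=
  P.isoLeftDerivedObj _ n

variable (A P Y n) in
/-- The projection of the cocycles of `Hom(P, Y)` onto the derived functor `Ext^n(X, Y)`. -/
def opcyclesToDerivedExt : ((opHomComplex A P Y).opcycles n).unop →ₗ[A]
    ((Ext A C n).obj (Opposite.op X)).obj Y :=
  ((derivedIso A P Y n).hom ≫ (opHomComplex A P Y).homologyι n).unop.hom

lemma opcyclesToDerivedExt_surjective : Function.Surjective (opcyclesToDerivedExt A P Y n) :=
  (ModuleCat.epi_iff_surjective
    ((derivedIso A P Y n).hom ≫ (opHomComplex A P Y).homologyι n).unop).1 inferInstance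

variable (A P Y n) in
/-- The class of a cocycle in the derived functor `Ext^n(X, Y)`. -/
def toDerivedExt : extCocycles A P Y n →ₗ[A] ((Ext A C n).obj (Opposite.op X)).obj Y :=
  opcyclesToDerivedExt A P Y n ∘ₗ (opcyclesEquiv A P Y n).symm.toLinearMap

lemma toDerivedExt_opcyclesEquiv (o) :
    toDerivedExt A P Y n (opcyclesEquiv A P Y n o) = opcyclesToDerivedExt A P Y n o := by
  simp [toDerivedExt]

lemma toDerivedExt_surjective : Function.Surjective (toDerivedExt A P Y n) :=
  opcyclesToDerivedExt_surjective.comp (opcyclesEquiv A P Y n).symm.surjective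

lemma toDerivedExt_eq_zero_iff (z : extCocycles A P Y n) : toDerivedExt A P Y n z = 0 ↔
    ∃ w, P.complex.d n ((ComplexShape.down ℕ).next n) ≫ w = z.1 := by
  obtain ⟨o, rfl⟩ := (opcyclesEquiv A P Y n).surjective z
  have hiso : Function.Injective (derivedIso A P Y n).hom.unop.hom :=
    (ModuleCat.mono_iff_injective _).1 inferInstance
  have hexact : (ShortComplex.mk ((opHomComplex A P Y).homologyι n)
      ((opHomComplex A P Y).fromOpcycles n _) (by simp)).Exact :=
    ShortComplex.exact_of_f_is_kernel _ ((opHomComplex A P Y).homologyIsKernel n _ rfl)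
  calc
    _ ↔ ((opHomComplex A P Y).homologyι n).unop.hom o = 0 := by
      rw [toDerivedExt_opcyclesEquiv]
      exact map_eq_zero_iff (derivedIso A P Y n).hom.unop.hom hiso
    _ ↔ ∃ w, ((opHomComplex A P Y).fromOpcycles n _).unop.hom w = o :=
      (ShortComplex.ShortExact.moduleCat_exact_iff_function_exact _).1 hexact.unop o
    _ ↔ _ := by
      refine exists_congr fun w => ?_
      rw [← opcyclesIncl_injective.eq_iff, coe_opcyclesEquiv]
      exact Eq.congr_left (opcyclesIncl_fromOpcycles w)

lemma toDerivedExt_naturality_left {g : X' ⟶ X} (φ : ProjectiveResolution.Hom P' P g)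
    (z : extCocycles A P Y n) :
    toDerivedExt A P' Y n ⟨φ.hom.f n ≫ z.1, comp_extCocycles φ.hom z⟩ =
      (((Ext A C n).map g.op).app Y).hom (toDerivedExt A P Y n z) := by
  obtain ⟨o, rfl⟩ := (opcyclesEquiv A P Y n).surjective z
  let F := ((linearYoneda A C).obj Y).rightOp
  let ψ : opHomComplex A P' Y ⟶ opHomComplex A P Y := (F.mapHomologicalComplex _).map φ.hom
  have hψ : (⟨φ.hom.f n ≫ (opcyclesEquiv A P Y n o).1, comp_extCocycles φ.hom _⟩ :
      extCocycles A P' Y n) =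
        opcyclesEquiv A P' Y n ((HomologicalComplex.opcyclesMap ψ n).unop.hom o) :=
    Subtype.ext
      (congrArg (fun f => f.unop.hom o) (HomologicalComplex.p_opcyclesMap ψ n)).symm
  have hcomm : (F.leftDerived n).map g ≫ (derivedIso A P Y n).hom ≫
      (opHomComplex A P Y).homologyι n =
        ((derivedIso A P' Y n).hom ≫ (opHomComplex A P' Y).homologyι n) ≫
          HomologicalComplex.opcyclesMap ψ n := by
    have h : (F.leftDerived n).map g ≫ (derivedIso A P Y n).hom =
        (derivedIso A P' Y n).hom ≫ HomologicalComplex.homologyMap ψ n :=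
      ProjectiveResolution.isoLeftDerivedObj_hom_naturality g P' P φ.hom
        (by simpa using φ.hom_f_zero_comp_π_f_zero) F n
    rw [reassoc_of% h, Category.assoc, HomologicalComplex.homologyι_naturality ψ n]
  rw [hψ, toDerivedExt_opcyclesEquiv, toDerivedExt_opcyclesEquiv]
  exact (congrArg (fun f => f.unop.hom o) hcomm).symm

lemma toDerivedExt_naturality_right (z : extCocycles A P Y n) (f : Y ⟶ Y') :
    toDerivedExt A P Y' n ⟨z.1 ≫ f, extCocycles_comp z f⟩ =
      (((Ext A C n).obj (Opposite.op X)).map f).hom (toDerivedExt A P Y n z) := by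
  obtain ⟨o, rfl⟩ := (opcyclesEquiv A P Y n).surjective z
  let α := NatTrans.rightOp ((linearYoneda A C).map f)
  let ψ : opHomComplex A P Y' ⟶ opHomComplex A P Y :=
    (NatTrans.mapHomologicalComplex α _).app P.complex
  have hψ : (⟨(opcyclesEquiv A P Y n o).1 ≫ f, extCocycles_comp _ f⟩ : extCocycles A P Y' n) =
      opcyclesEquiv A P Y' n ((HomologicalComplex.opcyclesMap ψ n).unop.hom o) :=
    Subtype.ext
      (congrArg (fun f => f.unop.hom o) (HomologicalComplex.p_opcyclesMap ψ n)).symm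
  have hcomm : (NatTrans.leftDerived α n).app X ≫ (derivedIso A P Y n).hom ≫
      (opHomComplex A P Y).homologyι n =
        ((derivedIso A P Y' n).hom ≫ (opHomComplex A P Y').homologyι n) ≫
          HomologicalComplex.opcyclesMap ψ n := by
    have h : (NatTrans.leftDerived α n).app X = (derivedIso A P Y' n).hom ≫
        HomologicalComplex.homologyMap ψ n ≫ (derivedIso A P Y n).inv :=
      ProjectiveResolution.leftDerived_app_eq α P n
    rw [h, Category.assoc, Category.assoc, Category.assoc, Iso.inv_hom_id_assoc,
      HomologicalComplex.homologyι_naturality ψ n]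
  rw [hψ, toDerivedExt_opcyclesEquiv, toDerivedExt_opcyclesEquiv]
  exact (congrArg (fun f => f.unop.hom o) hcomm).symm

end DerivedExt

end extCocycles

open extCocycles

variable [HasExt C] [EnoughProjectives C]

variable (A) in
/-- The comparison between the two versions of `Ext^n(X, Y)`. -/
def extEquivDerivedExt (X Y : C) (n : ℕ) :
    Abelian.Ext X Y n ≃ₗ[A] ((Ext A C n).obj (Opposite.op X)).obj Y :=
  ((toExt A (projectiveResolution X) Y n).quotKerEquivOfSurjective toExt_surjective).symm ≪≫ₗ
    Submodule.quotEquivOfEq _ _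
      (by ext z; exact (toExt_eq_zero_iff z).trans (toDerivedExt_eq_zero_iff z).symm) ≪≫ₗ
    (toDerivedExt A (projectiveResolution X) Y n).quotKerEquivOfSurjective toDerivedExt_surjective

lemma extEquivDerivedExt_toExt (z : extCocycles A (projectiveResolution X) Y n) :
    extEquivDerivedExt A X Y n (toExt A _ Y n z) = toDerivedExt A _ Y n z := by
  have h : ((toExt A _ Y n).quotKerEquivOfSurjective toExt_surjective).symm (toExt A _ Y n z) =
      Submodule.Quotient.mk z := by
    rw [LinearEquiv.symm_apply_eq]
    rfl
  simp only [extEquivDerivedExt, LinearEquiv.trans_apply, h]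
  rfl

lemma extEquivDerivedExt_naturality_left (g : X' ⟶ X) (e : Abelian.Ext X Y n) :
    extEquivDerivedExt A X' Y n ((Abelian.Ext.mk₀ g).comp e (zero_add n)) =
      (((Ext A C n).map g.op).app Y).hom (extEquivDerivedExt A X Y n e) := by
  obtain ⟨z, rfl⟩ := toExt_surjective (A := A) (P := projectiveResolution X) e
  let φ : ProjectiveResolution.Hom (projectiveResolution X') (projectiveResolution X) g :=
    ⟨_, by simpa using ProjectiveResolution.lift_commutes_zero g _ _⟩
  rw [← toExt_naturality_left φ z, extEquivDerivedExt_toExt, extEquivDerivedExt_toExt]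
  exact toDerivedExt_naturality_left φ z

lemma extEquivDerivedExt_naturality_right (f : Y ⟶ Y') (e : Abelian.Ext X Y n) :
    extEquivDerivedExt A X Y' n (e.comp (Abelian.Ext.mk₀ f) (add_zero n)) =
      (((Ext A C n).obj (Opposite.op X)).map f).hom (extEquivDerivedExt A X Y n e) := by
  obtain ⟨z, rfl⟩ := toExt_surjective (A := A) (P := projectiveResolution X) e
  rw [← toExt_naturality_right z f, extEquivDerivedExt_toExt, extEquivDerivedExt_toExt]
  exact toDerivedExt_naturality_right z f

end ExtComparison

section PowTorsion

variable {A : Type*} [CommRing A] (I : Ideal A) (M : Type*) [AddCommGroup M] [Module A M]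

/-- The `I`-power torsion submodule `Γ_I(M)`. -/
def powTorsion : Submodule A M where
  carrier := {x | ∃ n, ∀ a ∈ I ^ n, a • x = 0}
  zero_mem' := ⟨0, fun _ _ => smul_zero _⟩
  add_mem' := by
    rintro x y ⟨n, hx⟩ ⟨m, hy⟩
    refine ⟨max n m, fun a ha => ?_⟩
    rw [smul_add, hx a (Ideal.pow_le_pow_right (le_max_left n m) ha),
      hy a (Ideal.pow_le_pow_right (le_max_right n m) ha), add_zero]
  smul_mem' := by
    rintro r x ⟨n, hx⟩
    exact ⟨n, fun a ha => by rw [smul_comm, hx a ha, smul_zero]⟩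

variable {I M}

@[simp]
lemma mem_powTorsion {x : M} : x ∈ powTorsion I M ↔ ∃ n, ∀ a ∈ I ^ n, a • x = 0 := Iff.rfl

end PowTorsion

section IsShortExact

/-- The sequence `0 → X → Y → Z → 0` with maps `f` and `g` is exact. -/
structure IsShortExact {A X Y Z : Type*} [CommRing A] [AddCommGroup X] [AddCommGroup Y]
    [AddCommGroup Z] [Module A X] [Module A Y] [Module A Z] (f : X →ₗ[A] Y) (g : Y →ₗ[A] Z) :
    Prop where
  injective : Function.Injective f
  exact : Function.Exact f g
  surjective : Function.Surjective g

namespace IsShortExact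

lemma subtype_mkQ {A Y : Type*} [CommRing A] [AddCommGroup Y] [Module A Y] (K : Submodule A Y) :
    IsShortExact K.subtype K.mkQ where
  injective := K.subtype_injective
  exact := LinearMap.exact_subtype_mkQ K
  surjective := K.mkQ_surjective

lemma ker_subtype {A Y Z : Type*} [CommRing A] [AddCommGroup Y] [Module A Y] [AddCommGroup Z]
    [Module A Z] {g : Y →ₗ[A] Z} (hg : Function.Surjective g) :
    IsShortExact (LinearMap.ker g).subtype g where
  injective := Submodule.subtype_injective _
  exact := LinearMap.exact_subtype_ker_map g
  surjective := hg

variable {X Y Z X' Y' Z' : Type} [AddCommGroup X] [AddCommGroup Y] [AddCommGroup Z]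
  [Module R X] [Module R Y] [Module R Z] [AddCommGroup X'] [AddCommGroup Y'] [AddCommGroup Z']
  [Module R X'] [Module R Y'] [Module R Z'] {f : X →ₗ[R] Y} {g : Y →ₗ[R] Z}
  {f' : X' →ₗ[R] Y'} {g' : Y' →ₗ[R] Z'}

lemma shortExact (h : IsShortExact f g) : (ShortComplex.moduleCatMk f g
    h.exact.linearMap_comp_eq_zero).ShortExact where
  exact := (ShortComplex.moduleCat_exact_iff _).2 fun x hx => (h.exact x).1 hx
  mono_f := (ModuleCat.mono_iff_injective _).2 h.injective
  epi_g := (ModuleCat.epi_iff_surjective _).2 h.surjective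

/-- The class of a short exact sequence in `Ext^1`. -/
def extClass (h : IsShortExact f g) : Abelian.Ext (ModuleCat.of R Z) (ModuleCat.of R X) 1 :=
  h.shortExact.extClass

lemma extClass_naturality (h : IsShortExact f g) (h' : IsShortExact f' g') {a : X →ₗ[R] X'}
    {b : Y →ₗ[R] Y'} {c : Z →ₗ[R] Z'} (hf : f' ∘ₗ a = b ∘ₗ f) (hg : g' ∘ₗ b = c ∘ₗ g) :
    h.extClass.comp (Abelian.Ext.mk₀ (ModuleCat.ofHom a)) (add_zero 1) =
      (Abelian.Ext.mk₀ (ModuleCat.ofHom c)).comp h'.extClass (zero_add 1) :=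
  ShortComplex.ShortExact.extClass_naturality h.shortExact h'.shortExact
    { τ₁ := ModuleCat.ofHom a
      τ₂ := ModuleCat.ofHom b
      τ₃ := ModuleCat.ofHom c
      comm₁₂ := ModuleCat.hom_ext hf
      comm₂₃ := ModuleCat.hom_ext hg }

lemma exists_extClass_comp_eq (h : IsShortExact f g) [Module.Projective R Y] {W : ModuleCat.{0} R}
    {n : ℕ} (e : Abelian.Ext (ModuleCat.of R Z) W (n + 1)) :
    ∃ y : Abelian.Ext (ModuleCat.of R X) W n, h.extClass.comp y (add_comm 1 n) = e :=
  have : Projective (ModuleCat.of R Y) := (IsProjective.iff_projective _).1 inferInstance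
  Abelian.Ext.contravariant_sequence_exact₃ h.shortExact _ e
    (Abelian.Ext.eq_zero_of_projective (P := ModuleCat.of R Y) _) (add_comm 1 n)

end IsShortExact

end IsShortExact

namespace locH

section OfExt

open Limits

variable (I : Ideal R)

/-- The projection `R/I^m → R/I^n` for `n ≤ m`. -/
def quotPowMap {n m : ℕ} (h : n ≤ m) :
    ModuleCat.of R (R ⧸ I ^ m) ⟶ ModuleCat.of R (R ⧸ I ^ n) :=
  ModuleCat.ofHom (Submodule.mapQ _ _ LinearMap.id (Ideal.pow_le_pow_right h))

/-- The system of functors `Ext^i(R/I^n, -)` whose colimit is `H^i_I`. -/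
abbrev extDiagram (i : ℕ) : ℕᵒᵖᵒᵖ ⥤ ModuleCat.{0} R ⥤ ModuleCat.{0} R :=
  localCohomology.diagram (localCohomology.idealPowersDiagram I) i

instance (i : ℕ) : HasColimit (extDiagram I i) := localCohomology.hasColimitDiagram.{0, 0} _ i

variable (M : Type) [AddCommGroup M] [Module R M]

/-- The cocone exhibiting `H^i_I(M)` as the colimit of the modules `Ext^i(R/I^n, M)`. -/
def extCocone (i : ℕ) : Cocone (extDiagram I i ⋙ (evaluation _ _).obj (ModuleCat.of R M)) :=
  ((evaluation _ _).obj (ModuleCat.of R M)).mapCocone (colimit.cocone (extDiagram I i))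

/-- `H^i_I(M)` is the colimit of the modules `Ext^i(R/I^n, M)`. -/
def isColimitExtCocone (i : ℕ) : IsColimit (extCocone I M i) :=
  isColimitOfPreserves ((evaluation _ _).obj (ModuleCat.of R M))
    (colimit.isColimit (extDiagram I i))

/-- The canonical map `Ext^i(R/I^n, M) → H^i_I(M)`. -/
def ofExt (n i : ℕ) :
    Abelian.Ext (ModuleCat.of R (R ⧸ I ^ n)) (ModuleCat.of R M) i →ₗ[R] locH I i M :=
  ((colimit.ι (extDiagram I i) (Opposite.op (Opposite.op n))).app (ModuleCat.of R M)).hom ∘ₗ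
    (extEquivDerivedExt R (ModuleCat.of R (R ⧸ I ^ n)) (ModuleCat.of R M) i).toLinearMap

variable {M} {i : ℕ}

lemma ofExt_apply (n : ℕ) (e : Abelian.Ext (ModuleCat.of R (R ⧸ I ^ n)) (ModuleCat.of R M) i) :
    ofExt I M n i e =
      ((colimit.ι (extDiagram I i) (Opposite.op (Opposite.op n))).app (ModuleCat.of R M)).hom
        (extEquivDerivedExt R (ModuleCat.of R (R ⧸ I ^ n)) (ModuleCat.of R M) i e) :=
  rfl

lemma ofExt_quotPowMap_comp {n m : ℕ} (h : n ≤ m)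
    (e : Abelian.Ext (ModuleCat.of R (R ⧸ I ^ n)) (ModuleCat.of R M) i) :
    ofExt I M m i ((Abelian.Ext.mk₀ (quotPowMap I h)).comp e (zero_add i)) = ofExt I M n i e := by
  rw [ofExt_apply, ofExt_apply, extEquivDerivedExt_naturality_left]
  exact congrArg (fun f => (f.app (ModuleCat.of R M)).hom (extEquivDerivedExt R _ _ i e))
    (colimit.w (extDiagram I i) (homOfLE h).op.op)

lemma exists_ofExt_eq (x : locH I i M) : ∃ n e, ofExt I M n i e = x := by
  obtain ⟨j, y, hy⟩ := Concrete.isColimit_exists_rep _ (isColimitExtCocone I M i) x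
  refine ⟨j.unop.unop, (extEquivDerivedExt R _ _ i).symm y, Eq.trans ?_ hy⟩
  exact congrArg ((colimit.ι (extDiagram I i) j).app (ModuleCat.of R M)).hom
    ((extEquivDerivedExt R _ _ i).apply_symm_apply y)

lemma exists_quotPowMap_comp_eq_zero {n : ℕ}
    {e : Abelian.Ext (ModuleCat.of R (R ⧸ I ^ n)) (ModuleCat.of R M) i}
    (he : ofExt I M n i e = 0) :
    ∃ (m : ℕ) (h : n ≤ m), (Abelian.Ext.mk₀ (quotPowMap I h)).comp e (zero_add i) = 0 := by
  let j : ℕᵒᵖᵒᵖ := Opposite.op (Opposite.op n)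
  let z : (extDiagram I i ⋙ (evaluation _ _).obj (ModuleCat.of R M)).obj j :=
    extEquivDerivedExt R _ (ModuleCat.of R M) i e
  have hz : (extCocone I M i).ι.app j z = (extCocone I M i).ι.app j 0 :=
    he.trans (map_zero ((extCocone I M i).ι.app j).hom).symm
  obtain ⟨k, f, g, hfg⟩ := Concrete.isColimit_exists_of_rep_eq _ (isColimitExtCocone I M i) _ _ hz
  refine ⟨k.unop.unop, leOfHom f.unop.unop, (extEquivDerivedExt R _ _ i).injective ?_⟩
  rw [extEquivDerivedExt_naturality_left, map_zero]
  exact hfg.trans (map_zero ((extDiagram I i ⋙ (evaluation _ _).obj _).map g).hom)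

/-- A compatible family of maps out of the modules `Ext^i(R/I^n, M)` induces a map out of
`H^i_I(M)`. -/
lemma exists_desc {V : Type} [AddCommGroup V] [Module R V]
    (φ : ∀ n, Abelian.Ext (ModuleCat.of R (R ⧸ I ^ n)) (ModuleCat.of R M) i →ₗ[R] V)
    (hφ : ∀ n m (h : n ≤ m) e,
      φ m ((Abelian.Ext.mk₀ (quotPowMap I h)).comp e (zero_add i)) = φ n e) :
    ∃ d : locH I i M →ₗ[R] V, ∀ n e, d (ofExt I M n i e) = φ n e := by
  let E (n : ℕ) := extEquivDerivedExt R (ModuleCat.of R (R ⧸ I ^ n)) (ModuleCat.of R M) i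
  let c : Cocone (extDiagram I i ⋙ (evaluation _ _).obj (ModuleCat.of R M)) :=
    { pt := ModuleCat.of R V
      ι :=
        { app := fun j => ModuleCat.ofHom (φ j.unop.unop ∘ₗ (E j.unop.unop).symm.toLinearMap)
          naturality := fun j k f => by
            have h : j.unop.unop ≤ k.unop.unop := leOfHom f.unop.unop
            refine ModuleCat.hom_ext (LinearMap.ext fun x => ?_)
            obtain ⟨e, rfl⟩ := (E j.unop.unop).surjective x
            change φ k.unop.unop ((E k.unop.unop).symm ((((Ext R (ModuleCat.{0} R) i).map
              (quotPowMap I h).op).app (ModuleCat.of R M)).hom (E j.unop.unop e))) =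
                φ j.unop.unop ((E j.unop.unop).symm (E j.unop.unop e))
            rw [← extEquivDerivedExt_naturality_left, LinearEquiv.symm_apply_apply,
              LinearEquiv.symm_apply_apply, hφ] } }
  refine ⟨((isColimitExtCocone I M i).desc c).hom, fun n e => ?_⟩
  have hfac := (isColimitExtCocone I M i).fac c (Opposite.op (Opposite.op n))
  refine (congrArg (fun f => f.hom (E n e)) hfac).trans ?_
  exact congrArg (φ n) ((E n).symm_apply_apply e)

end OfExt

section Map

variable (I : Ideal R) {X Y Z : Type} [AddCommGroup X] [AddCommGroup Y] [AddCommGroup Z]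
  [Module R X] [Module R Y] [Module R Z] (i : ℕ)

lemma localCohomology_map_ofExt (n : ℕ) (f : X →ₗ[R] Y)
    (e : Abelian.Ext (ModuleCat.of R (R ⧸ I ^ n)) (ModuleCat.of R X) i) :
    ((localCohomology I i).map (ModuleCat.ofHom f)).hom (ofExt I X n i e) =
      ofExt I Y n i (e.comp (Abelian.Ext.mk₀ (ModuleCat.ofHom f)) (add_zero i)) := by
  rw [ofExt_apply, ofExt_apply, extEquivDerivedExt_naturality_right]
  exact congrArg (fun f => f.hom (extEquivDerivedExt R _ _ i e))
    ((Limits.colimit.ι (extDiagram I i) (Opposite.op (Opposite.op n))).naturality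
      (ModuleCat.ofHom f)).symm

/-- The map `H^i_I(X) → H^i_I(Y)` induced by a linear map `X → Y`. It is itself linear in the
latter. -/
def map : (X →ₗ[R] Y) →ₗ[R] locH I i X →ₗ[R] locH I i Y where
  toFun f := ((localCohomology I i).map (ModuleCat.ofHom f)).hom
  map_add' f g := by
    ext x
    obtain ⟨n, e, rfl⟩ := exists_ofExt_eq I x
    rw [LinearMap.add_apply, localCohomology_map_ofExt, localCohomology_map_ofExt,
      localCohomology_map_ofExt, ← map_add, ModuleCat.ofHom_add, Abelian.Ext.mk₀_add,
      Abelian.Ext.comp_add]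
  map_smul' r f := by
    ext x
    obtain ⟨n, e, rfl⟩ := exists_ofExt_eq I x
    rw [RingHom.id_apply, LinearMap.smul_apply, localCohomology_map_ofExt,
      localCohomology_map_ofExt, ← map_smul,
      show ModuleCat.ofHom (r • f) = r • ModuleCat.ofHom f from rfl, Abelian.Ext.mk₀_smul,
      Abelian.Ext.comp_smul]

variable {I i}

lemma map_ofExt (n : ℕ) (f : X →ₗ[R] Y)
    (e : Abelian.Ext (ModuleCat.of R (R ⧸ I ^ n)) (ModuleCat.of R X) i) :
    map I i f (ofExt I X n i e) =
      ofExt I Y n i (e.comp (Abelian.Ext.mk₀ (ModuleCat.ofHom f)) (add_zero i)) :=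
  localCohomology_map_ofExt I i n f e

lemma map_map (g : Y →ₗ[R] Z) (f : X →ₗ[R] Y) (x : locH I i X) :
    map I i g (map I i f x) = map I i (g ∘ₗ f) x :=
  congrArg (fun φ => φ.hom x)
    ((localCohomology I i).map_comp (ModuleCat.ofHom f) (ModuleCat.ofHom g)).symm

@[simp]
lemma map_id (x : locH I i X) : map I i LinearMap.id x = x :=
  congrArg (fun φ => φ.hom x) ((localCohomology I i).map_id (ModuleCat.of R X))

/-- A linear equivalence `X ≃ Y` induces an equivalence `H^i_I(X) ≃ H^i_I(Y)`. -/
def mapEquiv (e : X ≃ₗ[R] Y) : locH I i X ≃ₗ[R] locH I i Y :=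
  LinearEquiv.ofLinearMap (map I i e.toLinearMap) (map I i e.symm.toLinearMap)
    (LinearMap.ext fun x => by simp [map_map])
    (LinearMap.ext fun x => by simp [map_map])

lemma map_lsmul (r : R) (x : locH I i X) : map I i (LinearMap.lsmul R X r) x = r • x := by
  rw [show LinearMap.lsmul R X r = r • LinearMap.id from rfl, map_smul, LinearMap.smul_apply,
    map_id]

lemma exists_pow_smul_eq_zero (x : locH I i X) : ∃ n, ∀ a ∈ I ^ n, a • x = 0 := by
  obtain ⟨n, e, rfl⟩ := exists_ofExt_eq I x
  refine ⟨n, fun a ha => ?_⟩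
  have hzero : a • 𝟙 (ModuleCat.of R (R ⧸ I ^ n)) = 0 := by
    refine ModuleCat.hom_ext (LinearMap.ext fun y => ?_)
    obtain ⟨r, rfl⟩ := Ideal.Quotient.mk_surjective y
    exact Ideal.Quotient.eq_zero_iff_mem.2 (Ideal.mul_mem_right r _ ha)
  rw [← map_smul, ← Abelian.Ext.mk₀_id_comp e, ← Abelian.Ext.smul_comp, ← Abelian.Ext.mk₀_smul,
    hzero, Abelian.Ext.mk₀_zero, Abelian.Ext.zero_comp, map_zero]

end Map

section LongExactSequence

variable {I : Ideal R} {i : ℕ} {X Y Z : Type} [AddCommGroup X] [AddCommGroup Y] [AddCommGroup Z]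
  [Module R X] [Module R Y] [Module R Z] {f : X →ₗ[R] Y} {g : Y →ₗ[R] Z}

lemma exists_connectingMap (h : IsShortExact f g) : ∃ d : locH I i Z →ₗ[R] locH I (i + 1) X,
    ∀ n e, d (ofExt I Z n i e) = ofExt I X n (i + 1) (e.comp h.extClass rfl) := by
  refine exists_desc I (fun n =>
    { toFun := fun e => ofExt I X n (i + 1) (e.comp h.extClass rfl)
      map_add' := fun a b => by rw [Abelian.Ext.add_comp, map_add]
      map_smul' := fun r a => by rw [Abelian.Ext.smul_comp, map_smul]; rfl }) fun n m hnm e => ?_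
  simp only [LinearMap.coe_mk, AddHom.coe_mk]
  rw [← ofExt_quotPowMap_comp I hnm, Abelian.Ext.comp_assoc]
  lia

variable (I i) in
/-- The connecting map `H^i_I(Z) → H^(i+1)_I(X)` of a short exact sequence
`0 → X → Y → Z → 0`. -/
def connectingMap (h : IsShortExact f g) : locH I i Z →ₗ[R] locH I (i + 1) X :=
  (exists_connectingMap h).choose

lemma connectingMap_ofExt (h : IsShortExact f g) (n : ℕ)
    (e : Abelian.Ext (ModuleCat.of R (R ⧸ I ^ n)) (ModuleCat.of R Z) i) :
    connectingMap I i h (ofExt I Z n i e) = ofExt I X n (i + 1) (e.comp h.extClass rfl) :=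
  (exists_connectingMap h).choose_spec n e

lemma exact_connectingMap_map (h : IsShortExact f g) :
    Function.Exact (connectingMap I i h) (map I (i + 1) f) := by
  refine fun x => ⟨fun hx => ?_, ?_⟩
  · obtain ⟨n, e, rfl⟩ := exists_ofExt_eq I x
    rw [map_ofExt] at hx
    obtain ⟨m, hm, he⟩ := exists_quotPowMap_comp_eq_zero I hx
    obtain ⟨y, hy⟩ := Abelian.Ext.covariant_sequence_exact₁ _ h.shortExact
      ((Abelian.Ext.mk₀ (quotPowMap I hm)).comp e (zero_add _))
      ((Abelian.Ext.comp_assoc_of_third_deg_zero _ _ _ _).trans he) rfl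
    exact ⟨ofExt I Z m i y, (connectingMap_ofExt h m y).trans
      ((congrArg _ hy).trans (ofExt_quotPowMap_comp I hm e))⟩
  · rintro ⟨y, rfl⟩
    obtain ⟨n, e, rfl⟩ := exists_ofExt_eq I y
    rw [connectingMap_ofExt, map_ofExt, Abelian.Ext.comp_assoc_of_third_deg_zero]
    have hzero : h.extClass.comp (Abelian.Ext.mk₀ (ModuleCat.ofHom f)) (add_zero 1) = 0 :=
      h.shortExact.extClass_comp
    rw [hzero, Abelian.Ext.comp_zero, map_zero]

lemma exact_map_map (h : IsShortExact f g) : Function.Exact (map I i f) (map I i g) := by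
  refine fun x => ⟨fun hx => ?_, ?_⟩
  · obtain ⟨n, e, rfl⟩ := exists_ofExt_eq I x
    rw [map_ofExt] at hx
    obtain ⟨m, hm, he⟩ := exists_quotPowMap_comp_eq_zero I hx
    obtain ⟨y, hy⟩ := Abelian.Ext.covariant_sequence_exact₂ _ h.shortExact
      ((Abelian.Ext.mk₀ (quotPowMap I hm)).comp e (zero_add _))
      ((Abelian.Ext.comp_assoc_of_third_deg_zero _ _ _ _).trans he)
    exact ⟨ofExt I X m i y, (map_ofExt m f y).trans
      ((congrArg _ hy).trans (ofExt_quotPowMap_comp I hm e))⟩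
  · rintro ⟨y, rfl⟩
    rw [map_map, h.exact.linearMap_comp_eq_zero, map_zero, LinearMap.zero_apply]

lemma exact_map_connectingMap (h : IsShortExact f g) :
    Function.Exact (map I i g) (connectingMap I i h) := by
  refine fun x => ⟨fun hx => ?_, ?_⟩
  · obtain ⟨n, e, rfl⟩ := exists_ofExt_eq I x
    rw [connectingMap_ofExt] at hx
    obtain ⟨m, hm, he⟩ := exists_quotPowMap_comp_eq_zero I hx
    obtain ⟨y, hy⟩ := Abelian.Ext.covariant_sequence_exact₃ _ h.shortExact
      ((Abelian.Ext.mk₀ (quotPowMap I hm)).comp e (zero_add _)) rfl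
      ((Abelian.Ext.comp_assoc _ _ _ (zero_add _) rfl (by lia)).trans he)
    exact ⟨ofExt I Y m i y, (map_ofExt m g y).trans
      ((congrArg _ hy).trans (ofExt_quotPowMap_comp I hm e))⟩
  · rintro ⟨y, rfl⟩
    obtain ⟨n, e, rfl⟩ := exists_ofExt_eq I y
    rw [map_ofExt, connectingMap_ofExt, Abelian.Ext.comp_assoc_of_second_deg_zero]
    have hzero : (Abelian.Ext.mk₀ (ModuleCat.ofHom g)).comp h.extClass (zero_add 1) = 0 :=
      h.shortExact.comp_extClass
    rw [hzero, Abelian.Ext.comp_zero, map_zero]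

end LongExactSequence

end locH

section ArtinRees

variable {I : Ideal R} {L N : Type} [AddCommGroup L] [Module R L]
  [AddCommGroup N] [Module R N]

lemma IsShortExact.pow_smul_comp_extClass_comp_eq_zero {F : Type} [AddCommGroup F] [Module R F]
    {π : F →ₗ[R] L} (hπ : Function.Surjective π) {j s t : ℕ}
    (hst : I ^ s • (⊤ : Submodule R F) ⊓ LinearMap.ker π ≤ I ^ t • LinearMap.ker π)
    {y : Abelian.Ext (ModuleCat.of R (LinearMap.ker π)) (ModuleCat.of R N) j}
    (hy : (Abelian.Ext.mk₀ (ModuleCat.ofHom (I ^ t • (⊤ : Submodule R _)).subtype)).comp y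
      (zero_add j) = 0) :
    (Abelian.Ext.mk₀ (ModuleCat.ofHom (I ^ s • (⊤ : Submodule R L)).subtype)).comp
      ((ker_subtype hπ).extClass.comp y (add_comm 1 j)) (zero_add (j + 1)) = 0 := by
  have hmap : (I ^ s • (⊤ : Submodule R F)).map π = I ^ s • ⊤ := by
    rw [Submodule.map_smul'', Submodule.map_top, LinearMap.range_eq_top.2 hπ]
  let π' : ↥(I ^ s • (⊤ : Submodule R F)) →ₗ[R] ↥(I ^ s • (⊤ : Submodule R L)) :=
    π.restrict fun x hx => hmap ▸ Submodule.mem_map_of_mem hx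
  have hπ' : Function.Surjective π' := by
    rintro ⟨z, hz⟩
    obtain ⟨x, hx, rfl⟩ := hmap.symm ▸ hz
    exact ⟨⟨x, hx⟩, rfl⟩
  let b : LinearMap.ker π' →ₗ[R] ↥(I ^ t • (⊤ : Submodule R (LinearMap.ker π))) :=
    (((Submodule.subtype _ ∘ₗ (LinearMap.ker π').subtype).codRestrict (LinearMap.ker π)
      fun x => congrArg Subtype.val x.2).codRestrict _
      fun x => Submodule.mem_smul_top_iff _ _ _ |>.2 (hst ⟨x.1.2, congrArg Subtype.val x.2⟩))
  have hnat := extClass_naturality (ker_subtype hπ') (ker_subtype hπ)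
    (a := Submodule.subtype _ ∘ₗ b) (b := Submodule.subtype _) (c := Submodule.subtype _) rfl rfl
  rw [← Abelian.Ext.comp_assoc (h₁₂ := zero_add _) (h₂₃ := add_comm 1 j) (h := by lia), ← hnat,
    Abelian.Ext.comp_assoc_of_second_deg_zero, ModuleCat.ofHom_comp, ← Abelian.Ext.mk₀_comp_mk₀,
    Abelian.Ext.comp_assoc_of_second_deg_zero, hy, Abelian.Ext.comp_zero, Abelian.Ext.comp_zero]

lemma exists_pow_smul_comp_eq_zero [IsNoetherianRing R] {k : ℕ}
    (hk : I ^ k ≤ Module.annihilator R N) {j : ℕ} [Module.Finite R L]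
    (e : Abelian.Ext (ModuleCat.of R L) (ModuleCat.of R N) j) :
    ∃ s : ℕ, (Abelian.Ext.mk₀ (ModuleCat.ofHom (I ^ s • (⊤ : Submodule R L)).subtype)).comp e
      (zero_add j) = 0 := by
  induction j generalizing L with
  | zero =>
    refine ⟨k, ?_⟩
    obtain ⟨f, rfl⟩ := (Abelian.Ext.mk₀_bijective _ _).2 e
    rw [Abelian.Ext.mk₀_comp_mk₀, Abelian.Ext.mk₀_eq_zero_iff]
    refine ModuleCat.hom_ext (LinearMap.ext fun x => ?_)
    have hle : I ^ k • (⊤ : Submodule R L) ≤ LinearMap.ker f.hom :=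
      Submodule.smul_le.2 fun a ha y _ => LinearMap.mem_ker.2 <|
        (map_smul f.hom a y).trans (Module.mem_annihilator.1 (hk ha) _)
    exact hle x.2
  | succ j ih =>
    obtain ⟨m, π, hπ⟩ := Module.Finite.exists_fin' R L
    obtain ⟨y, rfl⟩ := (IsShortExact.ker_subtype hπ).exists_extClass_comp_eq e
    obtain ⟨t, ht⟩ := ih y
    obtain ⟨q, hq⟩ := Ideal.exists_pow_inf_eq_pow_smul I (LinearMap.ker π)
    refine ⟨t + q, IsShortExact.pow_smul_comp_extClass_comp_eq_zero hπ ?_ ht⟩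
    rw [hq (t + q) (Nat.le_add_left q t), Nat.add_sub_cancel]
    exact Submodule.smul_mono le_rfl inf_le_right

end ArtinRees

namespace locH

lemma subsingleton_of_pow_le_annihilator [IsNoetherianRing R] {I : Ideal R} {N : Type}
    [AddCommGroup N] [Module R N] {k : ℕ} (hk : I ^ k ≤ Module.annihilator R N) (j : ℕ) :
    Subsingleton (locH I (j + 1) N) := by
  refine subsingleton_of_forall_eq 0 fun x => ?_
  obtain ⟨n, e, rfl⟩ := exists_ofExt_eq I x
  have hses (n : ℕ) := IsShortExact.subtype_mkQ (I ^ n)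
  obtain ⟨y, rfl⟩ := (hses n).exists_extClass_comp_eq e
  obtain ⟨s, hs⟩ := exists_pow_smul_comp_eq_zero hk y
  have hle : I ^ (n + s) ≤ I ^ n := Ideal.pow_le_pow_right (Nat.le_add_right n s)
  have hmem (x : (I ^ (n + s) : Ideal R)) :
      Submodule.inclusion hle x ∈ I ^ s • (⊤ : Submodule R (I ^ n : Ideal R)) := by
    rw [Submodule.mem_smul_top_iff, smul_eq_mul, ← pow_add, add_comm]
    exact x.2
  have hnat := IsShortExact.extClass_naturality (hses (n + s)) (hses n)
    (a := Submodule.subtype _ ∘ₗ (Submodule.inclusion hle).codRestrict _ hmem)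
    (b := LinearMap.id) (c := Submodule.mapQ _ _ LinearMap.id hle) rfl rfl
  have hzero : (Abelian.Ext.mk₀ (quotPowMap I (Nat.le_add_right n s))).comp
      ((hses n).extClass.comp y (add_comm 1 j)) (zero_add _) = 0 := by
    rw [← Abelian.Ext.comp_assoc (h₁₂ := zero_add _) (h₂₃ := add_comm 1 j) (h := by lia)]
    refine (congrArg (fun z => z.comp y (add_comm 1 j)) hnat.symm).trans ?_
    rw [Abelian.Ext.comp_assoc_of_second_deg_zero, ModuleCat.ofHom_comp,
      ← Abelian.Ext.mk₀_comp_mk₀, Abelian.Ext.comp_assoc_of_second_deg_zero, hs,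
      Abelian.Ext.comp_zero, Abelian.Ext.comp_zero]
  rw [← ofExt_quotPowMap_comp I (Nat.le_add_right n s), hzero, map_zero]

section DegreeZero

variable {I : Ideal R} {M : Type} [AddCommGroup M] [Module R M]

lemma exists_toModule : ∃ d : locH I 0 M →ₗ[R] M,
    ∀ n (f : (R ⧸ I ^ n) →ₗ[R] M),
      d (ofExt I M n 0 (Abelian.Ext.mk₀ (ModuleCat.ofHom f))) = f 1 := by
  let E (n : ℕ) := Abelian.Ext.linearEquiv₀ (R := R) (X := ModuleCat.of R (R ⧸ I ^ n))
    (Y := ModuleCat.of R M)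
  have hE (n : ℕ) (f : ModuleCat.of R (R ⧸ I ^ n) ⟶ ModuleCat.of R M) :
      E n (Abelian.Ext.mk₀ f) = f := (E n).apply_symm_apply f
  obtain ⟨d, hd⟩ := exists_desc (M := M) (i := 0) I (fun n =>
    { toFun := fun e => (E n e).hom (1 : R ⧸ I ^ n)
      map_add' := fun a b => by rw [map_add]; rfl
      map_smul' := fun r a => by rw [map_smul]; rfl }) fun n m h e => by
        obtain ⟨f, rfl⟩ := (Abelian.Ext.mk₀_bijective _ _).2 e
        simp only [LinearMap.coe_mk, AddHom.coe_mk]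
        rw [Abelian.Ext.mk₀_comp_mk₀, hE, hE]
        rfl
  refine ⟨d, fun n f => (hd n _).trans ?_⟩
  simp only [LinearMap.coe_mk, AddHom.coe_mk]
  rw [hE]
  rfl

variable (I M) in
/-- The canonical map `H^0_I(M) → M`; it identifies `H^0_I(M)` with `Γ_I(M)`. -/
def toModule : locH I 0 M →ₗ[R] M := exists_toModule.choose

lemma toModule_ofExt (n : ℕ) (f : (R ⧸ I ^ n) →ₗ[R] M) :
    toModule I M (ofExt I M n 0 (Abelian.Ext.mk₀ (ModuleCat.ofHom f))) = f 1 :=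
  exists_toModule.choose_spec n f

lemma exists_ofExt_mk₀_eq (x : locH I 0 M) : ∃ n, ∃ f : (R ⧸ I ^ n) →ₗ[R] M,
    ofExt I M n 0 (Abelian.Ext.mk₀ (ModuleCat.ofHom f)) = x := by
  obtain ⟨n, e, rfl⟩ := exists_ofExt_eq I x
  obtain ⟨f, rfl⟩ := (Abelian.Ext.mk₀_bijective _ _).2 e
  exact ⟨n, f.hom, rfl⟩

variable (I M) in
lemma toModule_injective : Function.Injective (toModule I M) := by
  rw [injective_iff_map_eq_zero]
  intro x hx
  obtain ⟨n, f, rfl⟩ := exists_ofExt_mk₀_eq x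
  rw [toModule_ofExt] at hx
  have hf : f = 0 := LinearMap.ext fun y => by
    obtain ⟨r, rfl⟩ := Ideal.Quotient.mk_surjective y
    rw [LinearMap.zero_apply, ← mul_one (Ideal.Quotient.mk _ r), ← smul_zero r, ← hx, ← map_smul]
    rfl
  rw [hf, ModuleCat.ofHom_zero, Abelian.Ext.mk₀_zero, map_zero]

variable (I M) in
lemma range_toModule : LinearMap.range (toModule I M) = powTorsion I M := by
  refine le_antisymm ?_ ?_
  · rintro _ ⟨x, rfl⟩
    obtain ⟨n, hn⟩ := exists_pow_smul_eq_zero x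
    exact ⟨n, fun a ha => by rw [← map_smul, hn a ha, map_zero]⟩
  · rintro y ⟨n, hn⟩
    refine ⟨ofExt I M n 0 (Abelian.Ext.mk₀ (ModuleCat.ofHom
      (Submodule.liftQ _ (LinearMap.toSpanSingleton R M y) hn))), ?_⟩
    rw [toModule_ofExt]
    exact one_smul R y

end DegreeZero

end locH

section PowTorsion

variable {A : Type*} [CommRing A] {I : Ideal A} {M : Type*} [AddCommGroup M] [Module A M]

lemma powTorsion_eq_bot_iff :
    powTorsion I M = ⊥ ↔ ∀ x : M, (∀ a ∈ I, a • x = 0) → x = 0 := by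
  rw [eq_bot_iff]
  refine ⟨fun h x hx => h ⟨1, by rwa [pow_one]⟩, fun h => ?_⟩
  rintro x ⟨n, hn⟩
  rw [Submodule.mem_bot]
  induction n generalizing x with
  | zero => simpa using hn 1
  | succ n ih =>
    refine ih fun a ha => h (a • x) fun b hb => ?_
    rw [smul_smul]
    exact hn _ (pow_succ' I n ▸ Ideal.mul_mem_mul hb ha)

variable (I M) in
lemma exists_pow_le_annihilator_powTorsion [IsNoetherian A M] :
    ∃ n, I ^ n ≤ Module.annihilator A (powTorsion I M) := by
  obtain ⟨s, hs⟩ := IsNoetherian.noetherian (powTorsion I M)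
  have hpow : ∀ x ∈ s, ∃ n, ∀ a ∈ I ^ n, a • x = 0 := fun x hx =>
    mem_powTorsion.1 (hs ▸ Submodule.subset_span hx)
  choose! n hn using hpow
  refine ⟨s.sup n, fun a ha => Module.mem_annihilator.2 fun y => Subtype.ext ?_⟩
  have hker : powTorsion I M ≤ LinearMap.ker (LinearMap.lsmul A M a) := by
    rw [← hs, Submodule.span_le]
    exact fun x hx => hn x hx a (Ideal.pow_le_pow_right (Finset.le_sup hx) ha)
  exact hker y.2

variable (I M) in
lemma powTorsion_quotient_powTorsion [IsNoetherian A M] :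
    powTorsion I (M ⧸ powTorsion I M) = ⊥ := by
  refine powTorsion_eq_bot_iff.2 fun y hy => ?_
  obtain ⟨x, rfl⟩ := Submodule.mkQ_surjective _ y
  obtain ⟨n, hn⟩ := exists_pow_le_annihilator_powTorsion I M
  have hIx : ∀ a ∈ I, a • x ∈ powTorsion I M := fun a ha =>
    (Submodule.Quotient.mk_eq_zero _).1 (hy a ha)
  have hle : I ^ (n + 1) ≤ LinearMap.ker (LinearMap.toSpanSingleton A M x) := by
    rw [pow_succ, Ideal.mul_le]
    intro b hb a ha
    rw [LinearMap.mem_ker, LinearMap.toSpanSingleton_apply, mul_smul]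
    exact congrArg Subtype.val (Module.mem_annihilator.1 (hn hb) ⟨_, hIx a ha⟩)
  exact (Submodule.Quotient.mk_eq_zero _).2 ⟨n + 1, fun a ha => hle ha⟩

lemma isSMulRegular_of_powTorsion_span_singleton_eq_bot {y : A}
    (h : powTorsion (Ideal.span {y}) M = ⊥) : IsSMulRegular M y := by
  refine isSMulRegular_iff_right_eq_zero_of_smul.2 fun x hx => ?_
  refine powTorsion_eq_bot_iff.1 h x fun a ha => ?_
  obtain ⟨b, rfl⟩ := Ideal.mem_span_singleton'.1 ha
  rw [mul_smul, hx, smul_zero]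

lemma exists_isSMulRegular_of_powTorsion_eq_bot [IsNoetherianRing A] [Module.Finite A M]
    (h : powTorsion I M = ⊥) : ∃ x ∈ I, IsSMulRegular M x := by
  have hhom : Subsingleton ((A ⧸ I) →ₗ[A] M) := by
    refine subsingleton_of_forall_eq 0 fun f => Submodule.linearMap_qext _ <| LinearMap.ext_ring ?_
    refine powTorsion_eq_bot_iff.1 h _ fun a ha => ?_
    rw [LinearMap.comp_apply, ← map_smul, ← map_smul, smul_eq_mul, mul_one,
      Submodule.mkQ_apply, (Submodule.Quotient.mk_eq_zero I).2 ha, map_zero]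
  simpa only [Ideal.annihilator_quotient] using IsSMulRegular.subsingleton_linearMap_iff.1 hhom

lemma exists_forall_mem_iff_of_isAssociatedPrime [IsNoetherianRing A] {p : Ideal A}
    (hp : IsAssociatedPrime p M) : ∃ m : M, ∀ a, a ∈ p ↔ a • m = 0 := by
  obtain ⟨-, m, rfl⟩ := isAssociatedPrime_iff.1 hp
  exact ⟨m, fun a => by rw [Submodule.mem_colon_singleton, Submodule.mem_bot]⟩

end PowTorsion

lemma IsShortExact.of_isSMulRegular {A M : Type*} [CommRing A] [AddCommGroup M] [Module A M]
    {x : A} (hx : IsSMulRegular M x) :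
    IsShortExact (LinearMap.lsmul A M x) (Submodule.mkQ (x • (⊤ : Submodule A M))) :=
  ⟨hx, LinearMap.exact_lsmul_mkQ_smul_top M x, Submodule.mkQ_surjective _⟩

namespace locH

variable {I : Ideal R} {M : Type} [AddCommGroup M] [Module R M]

lemma subsingleton_of_isSMulRegular {i : ℕ} {x : R} (hxI : x ∈ I)
    (hx : IsSMulRegular (locH I i M) x) : Subsingleton (locH I i M) := by
  refine subsingleton_of_forall_eq 0 fun u => ?_
  obtain ⟨n, hn⟩ := exists_pow_smul_eq_zero u
  exact (hx.pow n).right_eq_zero_of_smul (hn _ (Ideal.pow_mem_pow hxI n))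

lemma subsingleton_succ_of_isSMulRegular {i : ℕ} {x : R} (hxI : x ∈ I) (hx : IsSMulRegular M x)
    (h : Subsingleton (locH I i (QuotSMulTop x M))) : Subsingleton (locH I (i + 1) M) := by
  refine subsingleton_of_isSMulRegular hxI <|
    isSMulRegular_iff_right_eq_zero_of_smul.2 fun u hu => ?_
  obtain ⟨v, rfl⟩ := (exact_connectingMap_map (.of_isSMulRegular hx) u).1
    ((map_lsmul x u).trans hu)
  rw [Subsingleton.elim v 0, map_zero]

lemma subsingleton_zero_of_powTorsion_eq_bot (h : powTorsion I M = ⊥) :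
    Subsingleton (locH I 0 M) := by
  refine subsingleton_of_forall_eq 0 fun u => toModule_injective I M ?_
  have hu : toModule I M u ∈ powTorsion I M := range_toModule I M ▸ ⟨u, rfl⟩
  rw [map_zero, ← Submodule.mem_bot R, ← h]
  exact hu

variable [IsNoetherianRing R] [Module.Finite R M]

variable (I M) in
lemma map_succ_mkQ_powTorsion_surjective (i : ℕ) :
    Function.Surjective (map I (i + 1) (powTorsion I M).mkQ) := by
  obtain ⟨n, hn⟩ := exists_pow_le_annihilator_powTorsion I M
  have := subsingleton_of_pow_le_annihilator hn (i + 1)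
  exact fun u => (exact_map_connectingMap (.subtype_mkQ (powTorsion I M)) u).1
    (Subsingleton.elim _ _)

variable (I M) in
lemma map_succ_mkQ_powTorsion_injective (i : ℕ) :
    Function.Injective (map I (i + 1) (powTorsion I M).mkQ) := by
  obtain ⟨n, hn⟩ := exists_pow_le_annihilator_powTorsion I M
  have := subsingleton_of_pow_le_annihilator hn i
  refine (injective_iff_map_eq_zero _).2 fun u hu => ?_
  obtain ⟨v, rfl⟩ := (exact_map_map (.subtype_mkQ (powTorsion I M)) u).1 hu
  rw [Subsingleton.elim v 0, map_zero]

/- Dividing out the `y`-torsion makes each new `y` regular, so no generator of `I` has to be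
adjusted by prime avoidance. -/
lemma subsingleton_of_le_radical {s : Finset R} (hs : (s : Set R) ⊆ I) {i : ℕ} (hi : s.card < i)
    (hI : I ≤ (Module.annihilator R M ⊔ Ideal.span s).radical) : Subsingleton (locH I i M) := by
  classical
  induction s using Finset.induction_on generalizing i M with
  | empty =>
    obtain ⟨i, rfl⟩ := Nat.exists_eq_add_one_of_ne_zero hi.ne_bot
    rw [Finset.coe_empty, Ideal.span_empty, sup_bot_eq] at hI
    obtain ⟨n, hn⟩ := Ideal.exists_pow_le_of_le_radical_of_fg hI (IsNoetherian.noetherian I)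
    exact subsingleton_of_pow_le_annihilator hn i
  | insert y s hys ih =>
    obtain ⟨i, rfl⟩ := Nat.exists_eq_add_one_of_ne_zero hi.ne_bot
    rw [Finset.card_insert_of_notMem hys, add_lt_add_iff_right] at hi
    rw [Finset.coe_insert, Set.insert_subset_iff] at hs
    rw [Finset.coe_insert, Ideal.span_insert] at hI
    have hle {J : Ideal R} (hM : Module.annihilator R M ≤ J) (hy : y ∈ J.radical) :
        I ≤ (J ⊔ Ideal.span s).radical := by
      refine hI.trans (Ideal.radical_le_radical_iff.2 (sup_le ?_ (sup_le ?_ ?_)))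
      · exact hM.trans (le_sup_left.trans Ideal.le_radical)
      · exact (Ideal.span_singleton_le_iff_mem _).2 (Ideal.radical_mono le_sup_left hy)
      · exact le_sup_right.trans Ideal.le_radical
    set T := powTorsion (Ideal.span {y}) M
    have hT : Subsingleton (locH I (i + 1) T) := by
      obtain ⟨n, hn⟩ := exists_pow_le_annihilator_powTorsion (Ideal.span {y}) M
      exact ih hs.2 (by lia) (hle (T.subtype.annihilator_le_of_injective T.subtype_injective)
        ⟨n, hn (Ideal.pow_mem_pow (Ideal.mem_span_singleton_self y) n)⟩)
    have hy : IsSMulRegular (M ⧸ T) y := isSMulRegular_of_powTorsion_span_singleton_eq_bot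
      (powTorsion_quotient_powTorsion _ M)
    have hQ : Subsingleton (locH I i (QuotSMulTop y (M ⧸ T))) :=
      ih hs.2 hi (hle ((T.mkQ.annihilator_le_of_surjective T.mkQ_surjective).trans
        (LinearMap.annihilator_le_of_surjective _ (Submodule.mkQ_surjective _)))
        (Ideal.le_radical (QuotSMulTop.mem_annihilator _ y)))
    have := subsingleton_succ_of_isSMulRegular hs.1 hy hQ
    refine subsingleton_of_forall_eq 0 fun u => ?_
    obtain ⟨v, rfl⟩ := (exact_map_map (.subtype_mkQ T) u).1 (Subsingleton.elim _ _)
    rw [Subsingleton.elim v 0, map_zero]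

variable (I) in
lemma exists_forall_subsingleton : ∃ B, ∀ (N : Type) [AddCommGroup N] [Module R N]
    [Module.Finite R N] (i : ℕ), B < i → Subsingleton (locH I i N) := by
  obtain ⟨s, rfl⟩ := IsNoetherian.noetherian I
  exact ⟨s.card, fun N _ _ _ i hi => subsingleton_of_le_radical Ideal.subset_span hi
    (le_sup_right.trans Ideal.le_radical)⟩

end locH

section Localization

variable {A : Type*} [CommRing A] {S : Submonoid A} {X Y Z : Type*}
  [AddCommGroup X] [Module A X] [AddCommGroup Y] [Module A Y] [AddCommGroup Z] [Module A Z]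

lemma subsingleton_localizedModule_of_exact {f : X →ₗ[A] Y} {g : Y →ₗ[A] Z}
    (h : Function.Exact f g) (hX : Subsingleton (LocalizedModule S X))
    (hZ : Subsingleton (LocalizedModule S Z)) : Subsingleton (LocalizedModule S Y) := by
  refine subsingleton_of_forall_eq 0 fun y => ?_
  obtain ⟨x, rfl⟩ := (LocalizedModule.map_exact S f g h y).1 (Subsingleton.elim _ _)
  rw [Subsingleton.elim x 0, map_zero]

lemma subsingleton_localizedModule_bot_iff :
    Subsingleton (LocalizedModule (⊥ : Submonoid A) X) ↔ Subsingleton X := by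
  simp only [LocalizedModule.subsingleton_iff, Submonoid.mem_bot, exists_eq_left, one_smul,
    subsingleton_iff_forall_eq (0 : X)]

/-- Some power of the ideal `I` annihilates the localization `S⁻¹X`. Stated elementwise, which
avoids passing to `S⁻¹A`. -/
def IsLocPowTorsion (S : Submonoid A) (I : Ideal A) (X : Type*) [AddCommGroup X] [Module A X] :
    Prop :=
  ∃ n : ℕ, ∀ a ∈ I ^ n, ∀ x : X, ∃ s ∈ S, s • a • x = 0

variable {I : Ideal A}

lemma isLocPowTorsion_of_exact {f : X →ₗ[A] Y} {g : Y →ₗ[A] Z} (h : Function.Exact f g)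
    (hX : IsLocPowTorsion S I X) (hZ : IsLocPowTorsion S I Z) : IsLocPowTorsion S I Y := by
  obtain ⟨m, hm⟩ := hX
  obtain ⟨n, hn⟩ := hZ
  refine ⟨m + n, fun a ha y => ?_⟩
  let K : Ideal A := LinearMap.ker (LocalizedModule.mkLinearMap S Y ∘ₗ
    LinearMap.toSpanSingleton A Y y)
  have hK {a : A} : a ∈ K ↔ ∃ s ∈ S, s • a • y = 0 := LocalizedModule.mem_ker_mkLinearMap_iff
  suffices hle : I ^ (m + n) ≤ K from hK.1 (hle ha)
  rw [pow_add, Ideal.mul_le]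
  intro b hb c hc
  obtain ⟨s, hs, hsc⟩ := hn c hc (g y)
  rw [← map_smul, ← map_smul] at hsc
  obtain ⟨x, hx⟩ := (h _).1 hsc
  obtain ⟨t, ht, htb⟩ := hm b hb x
  refine hK.2 ⟨t * s, S.mul_mem ht hs, ?_⟩
  rw [mul_smul, mul_smul, smul_comm s b, ← hx, ← map_smul, ← map_smul, htb, map_zero]

lemma isLocPowTorsion_of_surjective {f : X →ₗ[A] Y} (hf : Function.Surjective f)
    (hX : IsLocPowTorsion S I X) : IsLocPowTorsion S I Y := by
  obtain ⟨n, hn⟩ := hX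
  refine ⟨n, fun a ha => hf.forall.2 fun x => ?_⟩
  obtain ⟨s, hs, h⟩ := hn a ha x
  exact ⟨s, hs, by rw [← map_smul, ← map_smul, h, map_zero]⟩

end Localization

lemma algebraMapSubmonoid_quotient_primeCompl {A : Type*} [CommRing A] (P : Ideal A) [P.IsPrime] :
    Algebra.algebraMapSubmonoid (A ⧸ P) P.primeCompl = nonZeroDivisors (A ⧸ P) := by
  ext x
  obtain ⟨a, rfl⟩ := Ideal.Quotient.mk_surjective x
  rw [mem_nonZeroDivisors_iff_ne_zero, Ne, Ideal.Quotient.eq_zero_iff_mem]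
  refine ⟨?_, fun ha => ⟨a, ha, rfl⟩⟩
  rintro ⟨b, hb, hba⟩ ha
  exact hb ((Ideal.Quotient.eq_zero_iff_mem).1 (hba.trans (Ideal.Quotient.eq_zero_iff_mem.2 ha)))

open scoped TensorProduct in
lemma exists_linearMap_quotient_ne_zero {A M : Type*} [CommRing A] [IsNoetherianRing A]
    [AddCommGroup M] [Module A M] [Module.Finite A M] {P : Ideal A} [P.IsPrime]
    (h : Module.annihilator A M ≤ P) : ∃ f : M →ₗ[A] A ⧸ P, f ≠ 0 := by
  have : Nontrivial (P.ResidueField ⊗[A] M) :=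
    (Module.mem_support_iff_nontrivial_residueField_tensorProduct ⟨P, ‹_›⟩).1
      (Module.mem_support_iff_of_finite.2 h)
  have := Module.finitePresentation_of_finite A M
  obtain ⟨φ, hφ⟩ := exists_ne (0 : Module.Dual P.ResidueField (P.ResidueField ⊗[A] M))
  have : IsLocalizedModule P.primeCompl
      (IsScalarTower.toAlgHom A (A ⧸ P) P.ResidueField).toLinearMap := by
    rw [isLocalizedModule_iff_isLocalization, algebraMapSubmonoid_quotient_primeCompl]
    infer_instance
  obtain ⟨f, s, hf⟩ := Module.FinitePresentation.exists_lift_of_isLocalizedModule P.primeCompl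
    (IsScalarTower.toAlgHom A (A ⧸ P) P.ResidueField).toLinearMap
    (φ.restrictScalars A ∘ₗ TensorProduct.mk A P.ResidueField M 1)
  refine ⟨f, fun hf0 => hφ (TensorProduct.AlgebraTensorModule.ext fun x m => ?_)⟩
  have hs : algebraMap A P.ResidueField s ≠ 0 := fun h0 =>
    s.2 (Ideal.algebraMap_residueField_eq_zero.1 h0)
  have hm : φ (1 ⊗ₜ m) = 0 := by
    have := LinearMap.congr_fun hf m
    rw [hf0, LinearMap.comp_zero, LinearMap.zero_apply, LinearMap.smul_apply, Submonoid.smul_def,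
      Algebra.smul_def, eq_comm, mul_eq_zero, or_iff_right hs] at this
    exact this
  rw [← mul_one x, ← smul_eq_mul, ← TensorProduct.smul_tmul', map_smul, hm, smul_zero,
    LinearMap.zero_apply]

namespace locH

variable {S : Submonoid R} {I : Ideal R} {i : ℕ} [IsNoetherianRing R]

lemma subsingleton_localizedModule_of_forall_prime {J : Ideal R}
    (h : ∀ P : Ideal R, P.IsPrime → J ≤ P → Subsingleton (LocalizedModule S (locH I i (R ⧸ P))))
    {N : Type} [AddCommGroup N] [Module R N] [hN : Module.Finite R N]
    (hJ : J ≤ Module.annihilator R N) : Subsingleton (LocalizedModule S (locH I i N)) := by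
  revert hJ
  refine IsNoetherianRing.induction_on_isQuotientEquivQuotientPrime R hN
    (motive := fun N _ _ _ => J ≤ Module.annihilator R N →
      Subsingleton (LocalizedModule S (locH I i N))) ?_ ?_ ?_
  · intro N _ _ _ _ _
    have : Subsingleton (locH I i N) := subsingleton_of_forall_eq 0 fun u => by
      rw [← map_id u, Subsingleton.elim (LinearMap.id : N →ₗ[R] N) 0, map_zero,
        LinearMap.zero_apply]
    infer_instance
  · intro N _ _ _ P e hJ
    rw [e.annihilator_eq, Ideal.annihilator_quotient] at hJ
    have := h P.asIdeal P.2 hJ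
    exact (LocalizedModule.map_injective S (mapEquiv (I := I) (i := i) e).toLinearMap
      (mapEquiv e).injective).subsingleton
  · intro X _ _ _ Y _ _ _ Z _ _ _ f g hf hg hfg hX hZ hJ
    exact subsingleton_localizedModule_of_exact (exact_map_map ⟨hf, hfg, hg⟩)
      (hX (hJ.trans (f.annihilator_le_of_injective hf)))
      (hZ (hJ.trans (g.annihilator_le_of_surjective hg)))

lemma subsingleton_localizedModule_of_succ {M N : Type} [AddCommGroup M] [Module R M]
    [Module.Finite R M] [AddCommGroup N] [Module R N] [Module.Finite R N]
    (hM : Subsingleton (LocalizedModule S (locH I i M)))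
    (hsucc : ∀ (K : Type) [AddCommGroup K] [Module R K] [Module.Finite R K],
      Module.annihilator R M ≤ Module.annihilator R K →
        Subsingleton (LocalizedModule S (locH I (i + 1) K)))
    (hN : Module.annihilator R M ≤ Module.annihilator R N) :
    Subsingleton (LocalizedModule S (locH I i N)) := by
  refine subsingleton_localizedModule_of_forall_prime (fun P => ?_) hN
  induction P using IsNoetherian.induction with
  | hgt P ih =>
    intro hP hMP
    obtain ⟨f, hf⟩ := exists_linearMap_quotient_ne_zero hMP
    have hrange : Subsingleton (LocalizedModule S (locH I i (LinearMap.range f))) :=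
      subsingleton_localizedModule_of_exact
        (exact_map_connectingMap (.ker_subtype f.surjective_rangeRestrict)) hM
        (hsucc _ (LinearMap.annihilator_le_of_injective _ (Submodule.subtype_injective _)))
    refine subsingleton_localizedModule_of_exact
      (exact_map_map (.subtype_mkQ (LinearMap.range f))) hrange ?_
    obtain ⟨m, hm⟩ := DFunLike.exists_ne hf
    obtain ⟨d, hd⟩ := Submodule.mkQ_surjective P (f m)
    set J := Module.annihilator R ((R ⧸ P) ⧸ LinearMap.range f)
    have hPJ : P ≤ J := by
      conv_lhs => rw [← Ideal.annihilator_quotient (I := P)]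
      exact LinearMap.annihilator_le_of_surjective _ (Submodule.mkQ_surjective _)
    have hdJ : d ∈ J := by
      refine Module.mem_annihilator.2 <| (Submodule.mkQ_surjective _).forall.2 <|
        (Submodule.mkQ_surjective P).forall.2 fun r =>
          (Submodule.Quotient.mk_eq_zero _).2 ⟨r • m, ?_⟩
      rw [map_smul, ← hd, ← map_smul, smul_eq_mul, mul_comm]
      rfl
    have hdP : d ∉ P := fun h =>
      hm (hd.symm.trans ((Submodule.Quotient.mk_eq_zero P).2 h))
    refine subsingleton_localizedModule_of_forall_prime (J := J) (fun Q hQ hJQ => ?_) le_rfl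
    exact ih Q (hPJ.trans hJQ |>.lt_of_not_ge fun h => hdP (h (hJQ hdJ))) hQ
      (hMP.trans (hPJ.trans hJQ))

lemma subsingleton_localizedModule_of_annihilator_le {M N : Type} [AddCommGroup M] [Module R M]
    [Module.Finite R M] [AddCommGroup N] [Module R N] [Module.Finite R N] {c : ℕ}
    (h : ∀ i, c ≤ i → Subsingleton (LocalizedModule S (locH I i M))) (hi : c ≤ i)
    (hN : Module.annihilator R M ≤ Module.annihilator R N) :
    Subsingleton (LocalizedModule S (locH I i N)) := by
  obtain ⟨B, hB⟩ := exists_forall_subsingleton I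
  induction hk : B + 1 - i generalizing i N with
  | zero =>
    have := hB N i (by lia)
    infer_instance
  | succ k ih =>
    exact subsingleton_localizedModule_of_succ (h i hi)
      (fun K _ _ _ hK => ih (by lia) hK (by lia)) hN

end locH

section AssociatedPrimes

variable {A M : Type*} [CommRing A] [IsNoetherianRing A] [AddCommGroup M] [Module A M]
  {I p : Ideal A}

lemma not_le_of_isAssociatedPrime (h : powTorsion I M = ⊥) (hp : IsAssociatedPrime p M) :
    ¬ I ≤ p := by
  obtain ⟨m, hm⟩ := exists_forall_mem_iff_of_isAssociatedPrime hp
  intro hI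
  have hm0 : m = 0 := powTorsion_eq_bot_iff.1 h m fun a ha => (hm a).1 (hI ha)
  exact hp.isPrime.ne_top ((Ideal.eq_top_iff_one _).2 ((hm 1).2 (by rw [hm0, smul_zero])))

variable [Module.Finite A M]

lemma isAssociatedPrime_quotient_powTorsion (hp : IsAssociatedPrime p M) (hI : ¬ I ≤ p) :
    IsAssociatedPrime p (M ⧸ powTorsion I M) := by
  obtain ⟨n, hn⟩ := exists_pow_le_annihilator_powTorsion I M
  have := hp.isPrime
  refine (associatedPrimes.subset_union_of_exact (Submodule.subtype_injective (powTorsion I M))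
    (LinearMap.exact_subtype_mkQ _) hp).resolve_left fun h => hI ?_
  refine Ideal.IsPrime.le_of_pow_le (hn.trans ?_)
  simpa only [Submodule.annihilator_top] using h.annihilator_le

lemma isAssociatedPrime_of_quotient_powTorsion
    (hp : IsAssociatedPrime p (M ⧸ powTorsion I M)) : IsAssociatedPrime p M := by
  obtain ⟨n, hn⟩ := exists_pow_le_annihilator_powTorsion I M
  obtain ⟨a, ha, hap⟩ := SetLike.not_le_iff_exists.1 <|
    not_le_of_isAssociatedPrime (powTorsion_quotient_powTorsion I M) hp
  obtain ⟨y, hy⟩ := exists_forall_mem_iff_of_isAssociatedPrime hp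
  obtain ⟨x, rfl⟩ := Submodule.mkQ_surjective _ y
  have hpp := hp.isPrime
  have hmem (r : A) : r ∈ p ↔ r • x ∈ powTorsion I M := by
    rw [hy, ← map_smul, Submodule.mkQ_apply, Submodule.Quotient.mk_eq_zero]
  refine isAssociatedPrime_iff.2 ⟨hpp, a ^ n • x, Ideal.ext fun r => ?_⟩
  rw [Submodule.mem_colon_singleton, Submodule.mem_bot, smul_comm]
  refine ⟨fun hr => ?_, fun hr => ?_⟩
  · exact congrArg Subtype.val <|
      Module.mem_annihilator.1 (hn (Ideal.pow_mem_pow ha n)) ⟨_, (hmem r).1 hr⟩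
  · have har : a ^ n * r ∈ p := (hmem _).2 (by rw [mul_smul, hr]; exact zero_mem _)
    exact (hpp.mem_or_mem har).resolve_left fun h => hap (hpp.mem_of_pow_mem n h)

lemma exists_notMem_forall_mul_mem_annihilator {q : Ideal A} [q.IsPrime]
    (h : ∀ P, IsAssociatedPrime P M → P ≤ q → I ≤ P) :
    ∃ t ∉ q, ∃ n, ∀ a ∈ I ^ n, a * t ∈ Module.annihilator A M := by
  obtain ⟨n, hn⟩ := exists_pow_le_annihilator_powTorsion I M
  have hann : ¬ Module.annihilator A (M ⧸ powTorsion I M) ≤ q := fun hq => by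
    obtain ⟨P, hP, hPq⟩ := Ideal.exists_minimalPrimes_le hq
    have hPass : IsAssociatedPrime P (M ⧸ powTorsion I M) :=
      Module.associatedPrimes.minimalPrimes_annihilator_subset_associatedPrimes A _ hP
    exact not_le_of_isAssociatedPrime (powTorsion_quotient_powTorsion I M) hPass
      (h P (isAssociatedPrime_of_quotient_powTorsion hPass) hPq)
  obtain ⟨t, ht, htq⟩ := SetLike.not_le_iff_exists.1 hann
  refine ⟨t, htq, n, fun a ha => Module.mem_annihilator.2 fun m => ?_⟩
  have htm : t • m ∈ powTorsion I M := (Submodule.Quotient.mk_eq_zero _).1 <|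
    Module.mem_annihilator.1 ht (Submodule.Quotient.mk m)
  rw [mul_smul]
  exact congrArg Subtype.val (Module.mem_annihilator.1 (hn ha) ⟨_, htm⟩)

lemma isAssociatedPrime_quotSMulTop {P : Ideal A} {x : A} (hp : IsAssociatedPrime p M)
    (hx : IsSMulRegular M x) (hP : P ∈ (p ⊔ Ideal.span {x}).minimalPrimes) :
    IsAssociatedPrime P (QuotSMulTop x M) := by
  obtain ⟨m, hm⟩ := exists_forall_mem_iff_of_isAssociatedPrime hp
  let N : Submodule A M := Submodule.torsionBySet A M p
  have hN {y : M} : y ∈ N ↔ ∀ a ∈ p, a • y = 0 := by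
    rw [Submodule.mem_torsionBySet_iff, Subtype.forall]; rfl
  have hann : Module.annihilator A N = p := le_antisymm
    (fun a ha => (hm a).2 <| congrArg Subtype.val <|
      Module.mem_annihilator.1 ha ⟨m, hN.2 fun b hb => (hm b).1 hb⟩)
    (fun a ha => Module.mem_annihilator.2 fun y => Subtype.ext (hN.1 y.2 a ha))
  have hsupp (Q : Ideal A) (hQ : Q.IsPrime) :
      Module.annihilator A (QuotSMulTop x N) ≤ Q ↔ p ⊔ Ideal.span {x} ≤ Q := by
    have h := Set.ext_iff.1 (Module.support_quotSMulTop (R := A) (M := N) x) ⟨Q, hQ⟩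
    rwa [Set.mem_inter_iff, Module.mem_support_iff_of_finite, Module.mem_support_iff_of_finite,
      hann, PrimeSpectrum.mem_zeroLocus, Set.singleton_subset_iff, SetLike.mem_coe,
      ← Ideal.span_singleton_le_iff_mem, ← sup_le_iff] at h
  have hPN : IsAssociatedPrime P (QuotSMulTop x N) :=
    Module.associatedPrimes.minimalPrimes_annihilator_subset_associatedPrimes A _
      ⟨⟨hP.1.1, (hsupp P hP.1.1).2 hP.1.2⟩,
        fun Q hQ hQP => hP.2 ⟨hQ.1, (hsupp Q hQ.1).1 hQ.2⟩ hQP⟩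
  refine hPN.map_of_injective (QuotSMulTop.map x N.subtype)
    ((injective_iff_map_eq_zero _).2 fun u hu => ?_)
  obtain ⟨y, rfl⟩ := Submodule.mkQ_surjective _ u
  obtain ⟨z, -, hz⟩ := Submodule.mem_smul_pointwise_iff_exists _ _ _ |>.1
    ((Submodule.Quotient.mk_eq_zero _).1 hu)
  refine (Submodule.Quotient.mk_eq_zero _).2 <| (Submodule.mem_smul_pointwise_iff_exists _ _ _).2
    ⟨⟨z, hN.2 fun a ha => hx.right_eq_zero_of_smul ?_⟩, trivial, Subtype.ext hz⟩
  rw [smul_comm, hz]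
  exact hN.1 y.2 a ha

lemma exists_notMem_smul_eq_zero_of_forall_pow {P : Ideal A} [P.IsPrime] {x : A} (hx : x ∈ P)
    {z : M} (h : ∀ k : ℕ, ∃ s ∉ P, ∃ v : M, s • z = x ^ k • v) : ∃ w ∉ P, w • z = 0 := by
  let f := LocalizedModule.mkLinearMap P.primeCompl M
  let J : Ideal (Localization.AtPrime P) := Ideal.span {algebraMap A _ x}
  have hJ : J ≠ ⊤ := fun htop =>
    (IsLocalization.AtPrime.isUnit_to_map_iff _ P x).1 (Ideal.span_singleton_eq_top.1 htop) hx
  suffices hz : f z = 0 by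
    obtain ⟨w, hw⟩ := (IsLocalizedModule.eq_zero_iff P.primeCompl f).1 hz
    exact ⟨w, w.2, hw⟩
  rw [← Submodule.mem_bot (Localization.AtPrime P),
    ← Ideal.iInf_pow_smul_eq_bot_of_isLocalRing J hJ, Submodule.mem_iInf]
  intro k
  obtain ⟨s, hs, v, hv⟩ := h k
  have hu : IsUnit (algebraMap A (Localization.AtPrime P) s) :=
    (IsLocalization.AtPrime.isUnit_to_map_iff _ P s).2 hs
  refine (Submodule.smul_mem_iff_of_isUnit _ hu).1 ?_
  have hsz : algebraMap A (Localization.AtPrime P) s • f z =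
      algebraMap A (Localization.AtPrime P) x ^ k • f v := by
    rw [← map_pow, algebraMap_smul, algebraMap_smul, ← map_smul, ← map_smul, hv]
  exact hsz ▸ Submodule.smul_mem_smul
    (Ideal.pow_mem_pow (Ideal.mem_span_singleton_self _) k) Submodule.mem_top

end AssociatedPrimes

section Chains

/-- There is a chain of at least `n` strict inequalities from `a` up to `b`;
used for primes, where it bounds the height of `b` modulo `a` from below. -/
def HasChain {α : Type*} [Preorder α] (n : ℕ) (a b : α) : Prop :=
  ∃ l : LTSeries α, l.head = a ∧ l.last = b ∧ n ≤ l.length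

variable {α : Type*} [Preorder α] {n : ℕ} {a b : α}

lemma hasChain_zero_self (a : α) : HasChain 0 a a :=
  ⟨RelSeries.singleton _ a, rfl, rfl, Nat.zero_le _⟩

lemma HasChain.mono {m : ℕ} (h : HasChain n a b) (hmn : m ≤ n) : HasChain m a b :=
  let ⟨l, hhead, hlast, hn⟩ := h
  ⟨l, hhead, hlast, hmn.trans hn⟩

lemma HasChain.cons {c : α} (h : HasChain n a b) (hca : c < a) : HasChain (n + 1) c b := by
  obtain ⟨l, rfl, rfl, hn⟩ := h
  refine ⟨l.cons c hca, RelSeries.head_cons .., RelSeries.last_cons .., ?_⟩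
  rw [RelSeries.cons_length]
  exact Nat.add_le_add_right hn 1

lemma HasChain.of_le {α : Type*} [PartialOrder α] {n : ℕ} {a b c : α} (h : HasChain n a b)
    (hca : c ≤ a) : HasChain n c b := by
  obtain rfl | hlt := hca.eq_or_lt
  exacts [h, (h.cons hlt).mono n.le_succ]

end Chains

section ChainsToIdeal

open locH

variable {I : Ideal R}

lemma exists_smul_smul_eq_zero_of_mem_powTorsion {X Y Z : Type} [AddCommGroup X] [Module R X]
    [AddCommGroup Y] [Module R Y] [AddCommGroup Z] [Module R Z] {f : X →ₗ[R] Y} {g : Y →ₗ[R] Z}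
    {S : Submonoid R} {a : R} (h : IsShortExact f g)
    (hY : powTorsion I Y = ⊥) (ha : ∀ u : locH I 1 X, ∃ s ∈ S, s • a • u = 0) {z : Z}
    (hz : z ∈ powTorsion I Z) : ∃ s ∈ S, s • a • z = 0 := by
  obtain ⟨w, rfl⟩ : z ∈ LinearMap.range (toModule I Z) := range_toModule I Z ▸ hz
  obtain ⟨s, hs, hsw⟩ := ha (connectingMap I 0 h w)
  rw [← map_smul, ← map_smul] at hsw
  obtain ⟨v, hv⟩ := (exact_map_connectingMap h _).1 hsw
  have := subsingleton_zero_of_powTorsion_eq_bot hY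
  refine ⟨s, hs, ?_⟩
  rw [← map_smul, ← map_smul, ← hv, Subsingleton.elim v 0, map_zero, map_zero]

variable [IsNoetherianRing R] {M : Type} [AddCommGroup M] [Module R M] {p P : Ideal R} [P.IsPrime]
  {x : R} {S : Submonoid R}

lemma exists_notMem_smul_smul_eq_smul (hM : powTorsion I M = ⊥) (hx : IsSMulRegular M x)
    (hP : P ∈ (p ⊔ Ideal.span {x}).minimalPrimes) (hIP : I ≤ P) (hS : S ≤ P.primeCompl) {a : R}
    (ha : ∀ u : locH I 1 M, ∃ s ∈ S, s • a • u = 0) {m : M} (hm : ∀ b ∈ p, b • m = 0) :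
    ∃ s ∉ P, ∃ v : M, s • a • m = x • v := by
  obtain ⟨t, htP, n, hn⟩ := exists_notMem_forall_mul_mem_annihilator
    (M := R ⧸ (p ⊔ Ideal.span {x})) (I := I) (q := P) fun P' hP' hle => by
      have := hP'.annihilator_le
      rw [Submodule.annihilator_top, Ideal.annihilator_quotient] at this
      exact hIP.trans (hP.2 ⟨hP'.isPrime, this⟩ hle)
  rw [Ideal.annihilator_quotient] at hn
  have htm : Submodule.mkQ (x • (⊤ : Submodule R M)) (t • m) ∈
      powTorsion I (M ⧸ x • (⊤ : Submodule R M)) := mem_powTorsion.2 ⟨n, fun b hb => by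
    obtain ⟨c, hc, d, hd, hcd⟩ := Submodule.mem_sup.1 (hn b hb)
    obtain ⟨r, rfl⟩ := Ideal.mem_span_singleton'.1 hd
    rw [← map_smul, smul_smul, ← hcd, add_smul, hm c hc, zero_add, mul_comm, mul_smul]
    exact (Submodule.Quotient.mk_eq_zero _).2 (Submodule.smul_mem_pointwise_smul _ _ _ trivial)⟩
  obtain ⟨s, hs, hst⟩ :=
    exists_smul_smul_eq_zero_of_mem_powTorsion (.of_isSMulRegular hx) hM ha htm
  rw [← map_smul, ← map_smul] at hst
  obtain ⟨v, -, hv⟩ := (Submodule.mem_smul_pointwise_iff_exists _ _ _).1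
    ((Submodule.Quotient.mk_eq_zero _).1 hst)
  exact ⟨s * t, P.primeCompl.mul_mem (hS hs) htP, v, by rw [hv, mul_smul, smul_comm t a]⟩

variable [Module.Finite R M]

lemma not_le_of_mem_minimalPrimes_sup_span_singleton (hM : powTorsion I M = ⊥)
    (hp : IsAssociatedPrime p M) (hx : IsSMulRegular M x)
    (hP : P ∈ (p ⊔ Ideal.span {x}).minimalPrimes) (hS : S ≤ P.primeCompl)
    (hH : IsLocPowTorsion S I (locH I 1 M)) : ¬ I ≤ P := by
  intro hIP
  have hpp := hp.isPrime
  obtain ⟨n, hn⟩ := hH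
  obtain ⟨m, hm⟩ := exists_forall_mem_iff_of_isAssociatedPrime hp
  refine not_le_of_isAssociatedPrime hM hp (Ideal.IsPrime.le_of_pow_le (n := n) fun a ha => ?_)
  have hxP : x ∈ P := hP.1.2 (Ideal.mem_sup_right (Ideal.mem_span_singleton_self x))
  obtain ⟨w, hwP, hw⟩ : ∃ w ∉ P, w • a • m = 0 :=
    exists_notMem_smul_eq_zero_of_forall_pow hxP fun k => by
      have hPk : P ∈ (p ⊔ Ideal.span {x ^ (k + 1)}).minimalPrimes := by
        rw [← Ideal.radical_minimalPrimes, Ideal.radical_sup, ← Ideal.span_singleton_pow,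
          Ideal.radical_pow _ k.succ_ne_zero, ← Ideal.radical_sup, Ideal.radical_minimalPrimes]
        exact hP
      obtain ⟨s, hs, v, hv⟩ := exists_notMem_smul_smul_eq_smul hM (hx.pow (k + 1)) hPk hIP hS
        (hn a ha) fun b hb => (hm b).1 hb
      exact ⟨s, hs, x • v, by rw [hv, pow_succ, mul_smul]⟩
  rw [smul_smul, ← hm] at hw
  exact (hpp.mem_or_mem hw).resolve_left fun h => hwP (hP.1.2 (Ideal.mem_sup_left h))

lemma isLocPowTorsion_locH_quotient_powTorsion {i : ℕ} (h : IsLocPowTorsion S I (locH I i M)) :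
    IsLocPowTorsion S I (locH I i (M ⧸ powTorsion I M)) := by
  cases i with
  | zero =>
    have := subsingleton_zero_of_powTorsion_eq_bot (powTorsion_quotient_powTorsion I M)
    exact ⟨0, fun a _ u => ⟨1, S.one_mem, Subsingleton.elim _ _⟩⟩
  | succ i => exact isLocPowTorsion_of_surjective (map_succ_mkQ_powTorsion_surjective I M i) h

/-- The induction replaces `M` by `M / x M` for a nonzerodivisor `x ∈ I` and `p` by a minimal prime
of `p + x R`, which does not contain `I` because `H^1` is power torsion near `q`. -/
lemma hasChain_of_isAssociatedPrime {c : ℕ} {p q : PrimeSpectrum R}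
    (hp : IsAssociatedPrime p.asIdeal M) (hIp : ¬ I ≤ p.asIdeal) (hIq : I ≤ q.asIdeal)
    (hpq : p ≤ q) (hH : ∀ i < c, IsLocPowTorsion q.asIdeal.primeCompl I (locH I i M)) :
    HasChain c p q := by
  have hlt : p < q := lt_of_le_of_ne hpq fun h => hIp (h ▸ hIq)
  induction c generalizing M p with
  | zero => exact ((hasChain_zero_self q).cons hlt).mono (Nat.zero_le _)
  | succ c ih =>
    obtain rfl | hc := c.eq_zero_or_pos
    · exact (hasChain_zero_self q).cons hlt
    wlog hM : powTorsion I M = ⊥ generalizing M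
    · exact this (isAssociatedPrime_quotient_powTorsion hp hIp)
        (fun i hi => isLocPowTorsion_locH_quotient_powTorsion (hH i hi))
        (powTorsion_quotient_powTorsion I M)
    obtain ⟨x, hxI, hx⟩ := exists_isSMulRegular_of_powTorsion_eq_bot hM
    obtain ⟨P, hP, hPq⟩ := Ideal.exists_minimalPrimes_le <| sup_le (a := p.asIdeal) hpq
      ((Ideal.span_singleton_le_iff_mem _).2 (hIq hxI))
    have hPp : P.IsPrime := hP.1.1
    have hIP : ¬ I ≤ P := not_le_of_mem_minimalPrimes_sup_span_singleton hM hp hx hP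
      (S := q.asIdeal.primeCompl) (fun s hs h => hs (hPq h)) (hH 1 (Nat.succ_lt_succ hc))
    have hxp : x ∉ p.asIdeal := fun hxp => by
      obtain ⟨m, hm⟩ := exists_forall_mem_iff_of_isAssociatedPrime hp
      have hm0 : m = 0 := hx.right_eq_zero_of_smul ((hm x).1 hxp)
      exact p.2.ne_top ((Ideal.eq_top_iff_one _).2 ((hm 1).2 (by rw [hm0, smul_zero])))
    have hpP : p < ⟨P, hPp⟩ := lt_of_le_not_ge (le_sup_left.trans hP.1.2) fun h =>
      hxp (h (hP.1.2 (Ideal.mem_sup_right (Ideal.mem_span_singleton_self x))))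
    refine (ih (isAssociatedPrime_quotSMulTop hp hx hP) hIP hPq (fun i hi => ?_) ?_).cons hpP
    · exact isLocPowTorsion_of_exact (exact_map_connectingMap (.of_isSMulRegular hx))
        (hH i (Nat.lt_succ_of_lt hi)) (hH (i + 1) (Nat.succ_lt_succ hi))
    · exact lt_of_le_of_ne hPq fun h => hIP (hIq.trans (congrArg PrimeSpectrum.asIdeal h).ge)

end ChainsToIdeal

section Depth

variable {J : Ideal R} {N : Type} [AddCommGroup N] [Module R N]

lemma smul_ext_quotient_eq_zero {y : R} (hy : y ∈ J) {i : ℕ}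
    (e : Abelian.Ext (ModuleCat.of R (R ⧸ J)) (ModuleCat.of R N) i) : y • e = 0 := by
  have hid : y • 𝟙 (ModuleCat.of R (R ⧸ J)) = 0 :=
    ModuleCat.hom_ext <| LinearMap.ext <| (Submodule.mkQ_surjective J).forall.2 fun r =>
      (Submodule.Quotient.mk_eq_zero J).2 (J.mul_mem_right r hy)
  rw [← Abelian.Ext.mk₀_id_comp e, ← Abelian.Ext.smul_comp, ← Abelian.Ext.mk₀_smul, hid,
    Abelian.Ext.mk₀_zero, Abelian.Ext.zero_comp]

lemma nontrivial_extH_iff {d : ℕ} : Nontrivial (extH J d N) ↔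
    Nontrivial (Abelian.Ext (ModuleCat.of R (R ⧸ J)) (ModuleCat.of R N) d) := by
  have e := extEquivDerivedExt R (ModuleCat.of R (R ⧸ J)) (ModuleCat.of R N) d
  exact e.toEquiv.nontrivial_congr.symm

lemma nontrivial_extH_of_succ {y : R} (hy : y ∈ J) {C : Type} [AddCommGroup C] [Module R C]
    {g : N →ₗ[R] C} (h : IsShortExact (LinearMap.lsmul R N y) g) {d : ℕ}
    (hd : Nontrivial (extH J (d + 1) N)) : Nontrivial (extH J d C) := by
  rw [nontrivial_extH_iff] at hd ⊢
  obtain ⟨e, he⟩ := exists_ne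
    (0 : Abelian.Ext (ModuleCat.of R (R ⧸ J)) (ModuleCat.of R N) (d + 1))
  have hye := smul_ext_quotient_eq_zero hy e
  rw [Abelian.Ext.smul_eq_comp_mk₀] at hye
  obtain ⟨e', he'⟩ := Abelian.Ext.covariant_sequence_exact₁ _ h.shortExact e hye rfl
  exact ⟨e', 0, fun h0 => he (he'.symm.trans ((congrArg (fun z =>
    Abelian.Ext.comp z h.shortExact.extClass rfl) h0).trans (Abelian.Ext.zero_comp ..)))⟩

lemma nontrivial_extH_zero_iff [IsNoetherianRing R] [hJ : J.IsMaximal] :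
    Nontrivial (extH J 0 N) ↔ IsAssociatedPrime J N := by
  have e : Abelian.Ext (ModuleCat.of R (R ⧸ J)) (ModuleCat.of R N) 0 ≃ₗ[R] (R ⧸ J) →ₗ[R] N :=
    Abelian.Ext.linearEquiv₀ ≪≫ₗ ModuleCat.homLinearEquiv
  have : IsSimpleModule R (R ⧸ J) := isSimpleModule_iff_quot_maximal.2 ⟨J, hJ, ⟨.refl R _⟩⟩
  rw [nontrivial_extH_iff, e.toEquiv.nontrivial_congr,
    isAssociatedPrime_iff_exists_injective_linearMap, nontrivial_iff_exists_ne 0]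
  refine ⟨fun ⟨f, hf⟩ => ⟨hJ.isPrime, f, (LinearMap.injective_or_eq_zero f).resolve_right hf⟩,
    fun ⟨_, f, hf⟩ => ⟨f, ?_⟩⟩
  rintro rfl
  obtain ⟨u, hu⟩ := exists_ne (0 : R ⧸ J)
  exact hu (hf rfl)

lemma nontrivial_extH_maximalIdeal_zero_iff [IsNoetherianRing R] (p : Ideal R) [p.IsPrime] :
    Nontrivial (extH (IsLocalRing.maximalIdeal (Localization.AtPrime p)) 0
      (LocalizedModule p.primeCompl N)) ↔ IsAssociatedPrime p N := by
  rw [nontrivial_extH_zero_iff]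
  have hcomap := Set.ext_iff.1 <| open Module.associatedPrimes in
    preimage_comap_associatedPrimes_eq_associatedPrimes_of_isLocalizedModule p.primeCompl
      (Localization.AtPrime p) (LocalizedModule.mkLinearMap p.primeCompl N)
  refine (hcomap _).symm.trans ?_
  rw [Set.mem_preimage, ← Ideal.under, Localization.AtPrime.under_maximalIdeal]
  rfl

end Depth

section ChainsFromDepth

variable {I : Ideal R}

lemma isShortExact_lsmul_map_mkQ {A M : Type*} [CommRing A] [AddCommGroup M] [Module A M]
    {S : Submonoid A} {y : A} (h : ∀ m : M, y • m = 0 → ∃ s ∈ S, s • m = 0) :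
    IsShortExact (LinearMap.lsmul (Localization S) (LocalizedModule S M) (algebraMap A _ y))
      (LocalizedModule.map S (LinearMap.range (LinearMap.lsmul A M y)).mkQ) := by
  have hmap : LinearMap.lsmul (Localization S) (LocalizedModule S M) (algebraMap A _ y) =
      LocalizedModule.map S (LinearMap.lsmul A M y) := by
    ext u
    induction u using LocalizedModule.induction_on with
    | h m s => rw [LocalizedModule.map_mk, LinearMap.lsmul_apply, LinearMap.lsmul_apply,
        algebraMap_smul, LocalizedModule.smul'_mk]
  refine ⟨(injective_iff_map_eq_zero _).2 fun u hu => ?_,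
    hmap ▸ LocalizedModule.map_exact S _ _ (LinearMap.exact_map_mkQ_range _),
    LocalizedModule.map_surjective S _ (Submodule.mkQ_surjective _)⟩
  induction u using LocalizedModule.induction_on with
  | h m s =>
    rw [hmap, LocalizedModule.map_mk, IsLocalizedModule.mk_eq_mk',
      IsLocalizedModule.mk'_eq_zero'] at hu
    obtain ⟨w, hw⟩ := hu
    obtain ⟨t, ht, htm⟩ := h (w.1 • m) (by rw [smul_comm]; exact hw)
    rw [IsLocalizedModule.mk_eq_mk', IsLocalizedModule.mk'_eq_zero']
    exact ⟨⟨t, ht⟩ * w, (mul_smul t w.1 m).trans htm⟩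

lemma exists_mem_forall_mul_mem_annihilator_ker {A M : Type*} [CommRing A] [IsNoetherianRing A]
    [AddCommGroup M] [Module A M] [Module.Finite A M] {I p q : Ideal A} [q.IsPrime]
    (h : ∀ P, IsAssociatedPrime P M → p ≤ P → P ≤ q → I ≤ P) :
    ∃ y ∈ p, ∃ t ∉ q, ∃ n, ∀ a ∈ I ^ n,
      a * t ∈ Module.annihilator A (LinearMap.ker (LinearMap.lsmul A M y)) := by
  have hfin : {P | IsAssociatedPrime P M ∧ P ≤ q ∧ ¬ I ≤ P}.Finite :=
    (associatedPrimes.finite A M).subset fun P hP => hP.1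
  obtain ⟨y, hyp, hy⟩ := Set.not_subset.1 <| mt
    (Ideal.subset_union_prime_finite hfin (f := id) ⊥ ⊥ fun P hP _ _ => hP.1.isPrime).1
    fun ⟨P, ⟨hP, hPq, hIP⟩, hpP⟩ => hIP (h P hP hpP hPq)
  refine ⟨y, hyp, exists_notMem_forall_mul_mem_annihilator fun P hP hPq => ?_⟩
  by_contra hIP
  refine hy (Set.mem_biUnion (x := P)
    ⟨hP.map_of_injective _ (Submodule.subtype_injective _), hPq, hIP⟩ ?_)
  refine hP.annihilator_le ?_
  rw [Submodule.annihilator_top]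
  exact Module.mem_annihilator.2 fun m => Subtype.ext m.2

lemma isLocPowTorsion_locH_of_mul_mem_annihilator {K : Type} [AddCommGroup K] [Module R K]
    {S : Submonoid R} {t : R} (ht : t ∈ S) {n : ℕ}
    (h : ∀ a ∈ I ^ n, a * t ∈ Module.annihilator R K) (i : ℕ) :
    IsLocPowTorsion S I (locH I i K) := by
  refine ⟨n, fun a ha u => ⟨t, ht, ?_⟩⟩
  have h0 : LinearMap.lsmul R K (a * t) = 0 :=
    LinearMap.ext fun m => Module.mem_annihilator.1 (h a ha) m
  rw [smul_smul, mul_comm t, ← locH.map_lsmul, h0, map_zero, LinearMap.zero_apply]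

lemma isLocPowTorsion_locH_quotient_range {M : Type} [AddCommGroup M] [Module R M]
    {S : Submonoid R} (f : M →ₗ[R] M) {i : ℕ} (hi : IsLocPowTorsion S I (locH I i M))
    (hi' : IsLocPowTorsion S I (locH I (i + 1) M))
    (hK : IsLocPowTorsion S I (locH I (i + 2) (LinearMap.ker f))) :
    IsLocPowTorsion S I (locH I i (M ⧸ LinearMap.range f)) := by
  have h : IsShortExact (LinearMap.ker f.rangeRestrict).subtype f.rangeRestrict :=
    .ker_subtype f.surjective_rangeRestrict
  rw [← LinearMap.ker_rangeRestrict] at hK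
  exact isLocPowTorsion_of_exact (locH.exact_map_connectingMap (.subtype_mkQ _)) hi
    (isLocPowTorsion_of_exact (locH.exact_map_connectingMap h) hi' hK)

variable [IsNoetherianRing R]

/-- Near `q`, an element `y ∈ p` avoiding the associated primes that do not contain `I` is a
nonzerodivisor up to `I`-power torsion, so passing to `M / y M` lowers both the depth at `p` and
the range of torsion local cohomology by one. -/
lemma hasChain_of_nontrivial_extH {c d : ℕ} {M : Type} [AddCommGroup M] [Module R M]
    [Module.Finite R M] {p q : PrimeSpectrum R} (hIp : ¬ I ≤ p.asIdeal) (hIq : I ≤ q.asIdeal)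
    (hpq : p ≤ q)
    (hd : Nontrivial (extH (IsLocalRing.maximalIdeal (Localization.AtPrime p.asIdeal)) d
      (LocalizedModule p.asIdeal.primeCompl M)))
    (hH : ∀ i < c, IsLocPowTorsion q.asIdeal.primeCompl I (locH I i M)) :
    HasChain (c - d) p q := by
  induction d generalizing c M with
  | zero =>
    exact hasChain_of_isAssociatedPrime
      ((nontrivial_extH_maximalIdeal_zero_iff p.asIdeal).1 hd) hIp hIq hpq hH
  | succ d ih =>
    by_cases hP : ∃ P, IsAssociatedPrime P M ∧ p.asIdeal ≤ P ∧ P ≤ q.asIdeal ∧ ¬ I ≤ P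
    · obtain ⟨P, hPM, hpP, hPq, hIP⟩ := hP
      exact ((hasChain_of_isAssociatedPrime (p := ⟨P, hPM.isPrime⟩) hPM hIP hIq hPq hH).mono
        (Nat.sub_le _ _)).of_le hpP
    obtain ⟨y, hyp, t, htq, n, hn⟩ := exists_mem_forall_mul_mem_annihilator_ker (M := M)
      (I := I) (p := p.asIdeal) (q := q.asIdeal) fun P hPM hpP hPq =>
        by_contra fun hIP => hP ⟨P, hPM, hpP, hPq, hIP⟩
    obtain ⟨a, ha, hap⟩ := SetLike.not_le_iff_exists.1 hIp
    have hloc := isShortExact_lsmul_map_mkQ (M := M) (S := p.asIdeal.primeCompl) (y := y)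
      fun m hm => ⟨a ^ n * t, mul_mem (pow_mem hap n) (fun h => htq (hpq h)), congrArg Subtype.val
        (Module.mem_annihilator.1 (hn _ (Ideal.pow_mem_pow ha n)) ⟨m, hm⟩)⟩
    have hy : algebraMap R (Localization.AtPrime p.asIdeal) y ∈ IsLocalRing.maximalIdeal _ :=
      Localization.AtPrime.map_eq_maximalIdeal (I := p.asIdeal) ▸ Ideal.mem_map_of_mem _ hyp
    have hchain := ih (c := c - 1) (nontrivial_extH_of_succ hy hloc hd) fun i hi =>
      isLocPowTorsion_locH_quotient_range _ (hH i (by lia)) (hH (i + 1) (by lia))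
        (isLocPowTorsion_locH_of_mul_mem_annihilator htq hn (i + 2))
    exact hchain.mono (by lia)

end ChainsFromDepth

section ArtinianModules

lemma exists_forall_eq_of_antitone {α : Type*} [PartialOrder α] [WellFoundedLT α] {f : ℕ → α}
    (hf : Antitone f) : ∃ n, ∀ m, n ≤ m → f m = f n := by
  obtain ⟨n, hn⟩ := WellFoundedGT.monotone_chain_condition (⟨OrderDual.toDual ∘ f, hf⟩ : ℕ →o αᵒᵈ)
  exact ⟨n, fun m hm => (hn m hm).symm⟩

lemma exists_forall_forall_eq_of_antitone {α : Type*} [PartialOrder α] [WellFoundedLT α]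
    {f : ℕ → ℕ → α} (hf : Antitone f) (hf' : ∀ k, Antitone (f k)) :
    ∃ n, ∀ m, n ≤ m → ∀ k, f k m = f k n := by
  obtain ⟨a, ha⟩ := exists_forall_eq_of_antitone (f := fun n => f n n)
    fun i j hij => (hf hij j).trans (hf' i hij)
  choose b hb using fun k => exists_forall_eq_of_antitone (hf' k)
  have hdiag {k n : ℕ} (hk : a ≤ k) (hn : a ≤ n) : f k n = f a a :=
    le_antisymm ((hf hk n).trans (hf' a hn)) <|
      (ha (max k n) (hk.trans (le_max_left ..))).ge.trans <|
        (hf (le_max_left k n) _).trans (hf' k (le_max_right k n))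
  refine ⟨max a ((Finset.range a).sup b), fun m hm k => ?_⟩
  obtain hk | hk := lt_or_ge k a
  · have hbk : b k ≤ max a ((Finset.range a).sup b) :=
      (Finset.le_sup (Finset.mem_range.2 hk)).trans (le_max_right ..)
    rw [hb k _ hbk, hb k m (hbk.trans hm)]
  · rw [hdiag hk (le_max_left ..), hdiag hk ((le_max_left ..).trans hm)]

/-- Melkersson's criterion. A descending chain `N` is controlled by the submodules
`x ^ k • (N ∩ ker x ^ (k + 1))` of `ker x`. -/
lemma isArtinian_of_forall_exists_pow_smul_eq_zero {A X : Type*} [CommRing A] [AddCommGroup X]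
    [Module A X] {x : A} (hx : ∀ u : X, ∃ n : ℕ, x ^ n • u = 0)
    [IsArtinian A (LinearMap.ker (LinearMap.lsmul A X x))] : IsArtinian A X := by
  let F (k : ℕ) (N : Submodule A X) : Submodule A (LinearMap.ker (LinearMap.lsmul A X x)) :=
    (Submodule.map (LinearMap.lsmul A X (x ^ k))
      (N ⊓ LinearMap.ker (LinearMap.lsmul A X (x ^ (k + 1))))).comap (Submodule.subtype _)
  have hF {k : ℕ} {N : Submodule A X} {u} :
      u ∈ F k N ↔ ∃ v, (v ∈ N ∧ x ^ (k + 1) • v = 0) ∧ x ^ k • v = u.1 := Iff.rfl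
  have hFN (k : ℕ) : Monotone (F k) := fun N N' h u hu =>
    let ⟨v, ⟨hv, hv0⟩, hvu⟩ := hF.1 hu
    hF.2 ⟨v, ⟨h hv, hv0⟩, hvu⟩
  have hFk (N : Submodule A X) : Antitone fun k => F k N := antitone_nat_of_succ_le fun k u hu =>
    let ⟨v, ⟨hv, hv0⟩, hvu⟩ := hF.1 hu
    hF.2 ⟨x • v, ⟨N.smul_mem x hv, by rwa [smul_smul, ← pow_succ]⟩,
      by rwa [smul_smul, ← pow_succ]⟩
  rw [← monotone_stabilizes_iff_artinian]
  intro f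
  let N (n : ℕ) : Submodule A X := OrderDual.ofDual (f n)
  have hN : Antitone N := fun m n h => f.monotone h
  obtain ⟨n, hn⟩ := exists_forall_forall_eq_of_antitone (f := fun k n => F k (N n))
    (fun k k' h n => hFk (N n) h) (fun k m m' h => hFN k (hN h))
  suffices h : ∀ m, n ≤ m → N n ≤ N m from
    ⟨n, fun m hm => le_antisymm (f.monotone hm) (h m hm)⟩
  intro m hm u hu
  obtain ⟨k, hk⟩ := hx u
  induction k generalizing u with
  | zero =>
    rw [pow_zero, one_smul] at hk
    exact hk ▸ zero_mem _
  | succ k ih =>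
    let y : LinearMap.ker (LinearMap.lsmul A X x) :=
      ⟨x ^ k • u, by rwa [pow_succ', mul_smul] at hk⟩
    have hy : y ∈ F k (N n) := hF.2 ⟨u, ⟨hu, hk⟩, rfl⟩
    obtain ⟨v, ⟨hv, -⟩, hvu⟩ := hF.1 ((hn m hm k).ge hy)
    have huv : u - v ∈ N m := ih (sub_mem hu (hN hm hv)) (by rw [smul_sub, hvu, sub_self])
    simpa only [sub_add_cancel] using add_mem huv hv

lemma isArtinian_of_maximalIdeal_mem_minimalPrimes {B X : Type*} [CommRing B] [IsLocalRing B]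
    [IsNoetherianRing B] [AddCommGroup X] [Module B X] [Module.Finite B X] {J : Ideal B}
    (hJ : IsLocalRing.maximalIdeal B ∈ J.minimalPrimes) (hJX : J ≤ Module.annihilator B X) :
    IsArtinian B X := by
  have htor : Module.IsTorsionBySet B X J := fun u a => Module.mem_annihilator.1 (hJX a.2) u
  let := htor.module
  have := htor.isScalarTower (S := B)
  have := IsLocalRing.quotient_artinian_of_mem_minimalPrimes_of_isLocalRing J hJ
  have : Module.Finite (B ⧸ J) X := .of_restrictScalars_finite B _ _
  exact isArtinian_of_surjective_algebraMap (R := B ⧸ J) Ideal.Quotient.mk_surjective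

section Secondary

variable {A B X : Type*} [CommRing A] [Ring B] [Algebra A B] [AddCommGroup X] [Module A X]
  [Module B X] [IsScalarTower A B X] [IsArtinian B X] {U : Submodule B X}

lemma surjective_smul_of_supIrred (hU : SupIrred U) {r : A}
    (hr : r ∉ (Module.annihilator A U).radical) : Function.Surjective (fun u : U => r • u) := by
  let f : Module.End B U := Algebra.lsmul A B U r
  obtain ⟨n, hn⟩ := Filter.eventually_atTop.1 f.eventually_codisjoint_ker_pow_range_pow
  have hsup := congrArg (Submodule.map U.subtype) (hn (n + 1) n.le_succ).eq_top
  rw [Submodule.map_sup, Submodule.map_subtype_top] at hsup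
  have hf (k : ℕ) (u : U) : (f ^ k) u = r ^ k • u := by
    rw [← map_pow]; rfl
  have htop {V : Submodule B U} (h : V.map U.subtype = U) : V = ⊤ :=
    Submodule.map_injective_of_injective U.subtype_injective
      (h.trans (Submodule.map_subtype_top U).symm)
  obtain hker | hrange := hU.2 hsup
  · refine absurd ⟨n + 1, Module.mem_annihilator.2 fun u => ?_⟩ hr
    rw [← hf]
    exact LinearMap.mem_ker.1 (htop hker ▸ Submodule.mem_top)
  · intro u
    obtain ⟨v, hv⟩ := LinearMap.mem_range.1 (htop hrange ▸ Submodule.mem_top (x := u))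
    exact ⟨r ^ n • v, (smul_smul ..).trans (by rw [← pow_succ', ← hf, hv])⟩

lemma isPrime_radical_annihilator_of_supIrred (hU : SupIrred U) :
    (Module.annihilator A U).radical.IsPrime := by
  have hU0 : Nontrivial U := (Submodule.nontrivial_iff_ne_bot).2 hU.ne_bot
  refine Ideal.isPrime_iff.2 ⟨fun h => ?_, fun {a b} ⟨n, hn⟩ => ?_⟩
  · rw [Ideal.radical_eq_top, Module.annihilator_eq_top_iff] at h
    exact not_subsingleton U h
  · by_contra! h
    have hsurj : Function.Surjective (fun u : U => (a * b) • u) := by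
      simpa only [Function.comp_def, mul_smul] using
        (surjective_smul_of_supIrred hU h.1).comp (surjective_smul_of_supIrred hU h.2)
    obtain ⟨u, hu⟩ := exists_ne (0 : U)
    obtain ⟨v, rfl⟩ := hsurj.iterate n u
    rw [smul_iterate] at hu
    exact hu (Module.mem_annihilator.1 hn v)

lemma exists_mem_surjective_smul_of_smul_top_eq_top {A X : Type*} (B : Type*) [CommRing A]
    [Ring B] [Algebra A B] [AddCommGroup X] [Module A X] [Module B X] [IsScalarTower A B X]
    [IsNoetherianRing A] [IsArtinian B X] {I : Ideal A} (hI : I • (⊤ : Submodule A X) = ⊤) :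
    ∃ x ∈ I, Function.Surjective (fun u : X => x • u) := by
  obtain ⟨s, hs, hirr⟩ := exists_supIrred_decomposition (⊤ : Submodule B X)
  let P (U : Submodule B X) : Ideal A := (Module.annihilator A U).radical
  obtain ⟨x, hxI, hx⟩ : ∃ x ∈ I, ∀ U ∈ s, ¬ I ≤ P U → x ∉ P U := by
    have hfin : {U ∈ (s : Set (Submodule B X)) | ¬ I ≤ P U}.Finite := s.finite_toSet.sep _
    obtain ⟨x, hxI, hx⟩ := Set.not_subset.1 <| mt (Ideal.subset_union_prime_finite hfin (f := P) ⊥ ⊥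
      fun U hU _ _ => isPrime_radical_annihilator_of_supIrred (hirr hU.1)).1
      fun ⟨U, hU, hIU⟩ => hU.2 hIU
    exact ⟨x, hxI, fun U hU hIU hxU => hx (Set.mem_biUnion ⟨hU, hIU⟩ hxU)⟩
  have hpow (U) (hU : U ∈ s) : ∃ k, ∀ a ∈ I ^ k, ∀ u ∈ U, ∃ v : X, x • v = a • u := by
    by_cases hIU : I ≤ P U
    · obtain ⟨k, hk⟩ := Ideal.exists_pow_le_of_le_radical_of_fg hIU (IsNoetherian.noetherian I)
      exact ⟨k, fun a ha u hu => ⟨0, (smul_zero x).trans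
        (congrArg Subtype.val (Module.mem_annihilator.1 (hk ha) ⟨u, hu⟩)).symm⟩⟩
    · refine ⟨0, fun a _ u hu => ?_⟩
      obtain ⟨v, hv⟩ := surjective_smul_of_supIrred (hirr hU) (hx U hU hIU) (a • ⟨u, hu⟩)
      exact ⟨v, congrArg Subtype.val hv⟩
  choose! k hk using hpow
  have hrange : I ^ s.sup k • (⊤ : Submodule A X) ≤ LinearMap.range (LinearMap.lsmul A X x) := by
    refine Submodule.smul_le.2 fun a ha u _ => ?_
    have hsup : s.sup id ≤
        (LinearMap.range (Algebra.lsmul A B X x)).comap (Algebra.lsmul A B X a) :=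
      Finset.sup_le fun U hU u hu => hk U hU a (Ideal.pow_le_pow_right (Finset.le_sup hU) ha) u hu
    exact hsup (hs ▸ Submodule.mem_top)
  have htop (n : ℕ) : I ^ n • (⊤ : Submodule A X) = ⊤ := by
    induction n with
    | zero => rw [pow_zero, Ideal.one_eq_top, Submodule.top_smul]
    | succ n ih => rw [pow_succ, mul_smul, hI, ih]
  exact ⟨x, hxI, fun u => hrange ((htop _).ge Submodule.mem_top)⟩

end Secondary

end ArtinianModules

section LocalizedModules

lemma localizedModule_map_surjective_of_exact {A X Y Z : Type*} [CommRing A] {S : Submonoid A}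
    [AddCommGroup X] [Module A X] [AddCommGroup Y] [Module A Y] [AddCommGroup Z] [Module A Z]
    {f : X →ₗ[A] Y} {g : Y →ₗ[A] Z} (h : Function.Exact f g)
    (hZ : Subsingleton (LocalizedModule S Z)) :
    Function.Surjective (LocalizedModule.map S f) :=
  fun y => (LocalizedModule.map_exact S f g h y).1 (hZ.elim _ _)

lemma isArtinian_localizedModule_of_le_radical_annihilator {A X : Type*} [CommRing A]
    [IsNoetherianRing A] [AddCommGroup X] [Module A X] [Module.Finite A X] {J q : Ideal A}
    [q.IsPrime] (hq : q ∈ J.minimalPrimes) (hJ : J ≤ (Module.annihilator A X).radical) :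
    IsArtinian (Localization.AtPrime q) (LocalizedModule q.primeCompl X) := by
  let K := Module.annihilator A X ⊓ q
  have hJK : J ≤ K.radical := by
    rw [Ideal.radical_inf, Ideal.IsPrime.radical (I := q) ‹_›]
    exact le_inf hJ hq.1.2
  have hqK : q ∈ K.minimalPrimes := ⟨⟨‹_›, inf_le_right⟩, fun Q hQ hQq =>
    hq.2 ⟨hQ.1, hJK.trans (hQ.1.radical_le_iff.2 hQ.2)⟩ hQq⟩
  refine isArtinian_of_maximalIdeal_mem_minimalPrimes
    (J := K.map (algebraMap A (Localization.AtPrime q))) ?_ ?_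
  · rw [IsLocalization.minimalPrimes_map q.primeCompl, Set.mem_preimage,
      Localization.AtPrime.under_maximalIdeal]
    exact hqK
  · refine Ideal.map_le_iff_le_comap.2 fun a ha => Module.mem_annihilator.2 fun u => ?_
    induction u using LocalizedModule.induction_on with
    | h u s =>
      rw [algebraMap_smul, LocalizedModule.smul'_mk, Module.mem_annihilator.1 ha.1 u,
        LocalizedModule.zero_mk]

lemma localizedModule_map_lsmul {A X : Type*} [CommRing A] [AddCommGroup X] [Module A X]
    {S : Submonoid A} (a : A) (u : LocalizedModule S X) :
    LocalizedModule.map S (LinearMap.lsmul A X a) u = a • u := by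
  induction u using LocalizedModule.induction_on with
  | h u s => rw [LocalizedModule.map_mk, LocalizedModule.smul'_mk, LinearMap.lsmul_apply]

lemma map_comp_localizedModule {A X Y Z : Type*} [CommRing A] {S : Submonoid A}
    [AddCommGroup X] [Module A X] [AddCommGroup Y] [Module A Y] [AddCommGroup Z] [Module A Z]
    (g : Y →ₗ[A] Z) (f : X →ₗ[A] Y) (u : LocalizedModule S X) :
    LocalizedModule.map S (g ∘ₗ f) u = LocalizedModule.map S g (LocalizedModule.map S f u) := by
  induction u using LocalizedModule.induction_on with
  | h u s => simp only [LocalizedModule.map_mk, LinearMap.comp_apply]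

end LocalizedModules

namespace locH

variable {I p q : Ideal R} [q.IsPrime]

lemma isArtinian_localizedModule_zero [IsNoetherianRing R] {N : Type} [AddCommGroup N]
    [Module R N] [Module.Finite R N] (hq : q ∈ (I ⊔ p).minimalPrimes)
    (hN : p ≤ Module.annihilator R N) :
    IsArtinian (Localization.AtPrime q) (LocalizedModule q.primeCompl (locH I 0 N)) := by
  have : Module.Finite R (locH I 0 N) := .of_injective _ (toModule_injective I N)
  refine isArtinian_localizedModule_of_le_radical_annihilator hq (sup_le ?_ ?_)
  · obtain ⟨n, hn⟩ := exists_pow_le_annihilator_powTorsion I N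
    refine fun a ha => ⟨n, Module.mem_annihilator.2 fun u => toModule_injective I N ?_⟩
    have hu : toModule I N u ∈ powTorsion I N := range_toModule I N ▸ ⟨u, rfl⟩
    rw [map_smul, map_zero]
    exact congrArg Subtype.val (Module.mem_annihilator.1 (hn (Ideal.pow_mem_pow ha n)) ⟨_, hu⟩)
  · exact hN.trans <| (LinearMap.annihilator_le_of_injective _ (toModule_injective I N)).trans
      Ideal.le_radical

lemma isArtinian_localizedModule_succ {i : ℕ} {N : Type} [AddCommGroup N]
    [Module R N] {x : R} (hxI : x ∈ I) (hx : IsSMulRegular N x)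
    (h : IsArtinian (Localization.AtPrime q)
      (LocalizedModule q.primeCompl (locH I i (QuotSMulTop x N)))) :
    IsArtinian (Localization.AtPrime q) (LocalizedModule q.primeCompl (locH I (i + 1) N)) := by
  let B := Localization.AtPrime q
  let X := LocalizedModule q.primeCompl (locH I (i + 1) N)
  let φ := LocalizedModule.map q.primeCompl
    (connectingMap I i (IsShortExact.of_isSMulRegular hx))
  have hker : LinearMap.ker (LinearMap.lsmul B X (algebraMap R B x)) ≤ LinearMap.range φ := by
    intro u hu
    refine (LocalizedModule.map_exact _ _ _ (exact_connectingMap_map _) u).1 ?_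
    have hmap : map I (i + 1) (LinearMap.lsmul R N x) = LinearMap.lsmul R _ x :=
      LinearMap.ext (map_lsmul x)
    rw [hmap]
    exact (localizedModule_map_lsmul x u).trans ((algebraMap_smul B x u).symm.trans hu)
  have : IsArtinian B (LinearMap.range φ) :=
    isArtinian_of_surjective _ φ.rangeRestrict φ.surjective_rangeRestrict
  have := isArtinian_of_le hker
  refine isArtinian_of_forall_exists_pow_smul_eq_zero (x := algebraMap R B x) fun u => ?_
  induction u using LocalizedModule.induction_on with
  | h u s =>
    obtain ⟨n, hn⟩ := exists_pow_smul_eq_zero u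
    refine ⟨n, ?_⟩
    rw [← map_pow, algebraMap_smul, LocalizedModule.smul'_mk, hn _ (Ideal.pow_mem_pow hxI n),
      LocalizedModule.zero_mk]

lemma isArtinian_localizedModule [IsNoetherianRing R] (hq : q ∈ (I ⊔ p).minimalPrimes) {i : ℕ}
    {N : Type} [AddCommGroup N] [Module R N] [Module.Finite R N]
    (hN : p ≤ Module.annihilator R N) :
    IsArtinian (Localization.AtPrime q) (LocalizedModule q.primeCompl (locH I i N)) := by
  induction i generalizing N with
  | zero => exact isArtinian_localizedModule_zero hq hN
  | succ i ih =>
    have hann {N' : Type} [AddCommGroup N'] [Module R N'] {f : N →ₗ[R] N'}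
        (hf : Function.Surjective f) : p ≤ Module.annihilator R N' :=
      hN.trans (f.annihilator_le_of_surjective hf)
    obtain ⟨x, hxI, hx⟩ :=
      exists_isSMulRegular_of_powTorsion_eq_bot (powTorsion_quotient_powTorsion I N)
    have := isArtinian_localizedModule_succ hxI hx <|
      ih (hann (f := Submodule.mkQ _ ∘ₗ (powTorsion I N).mkQ)
        ((Submodule.mkQ_surjective _).comp (Submodule.mkQ_surjective _)))
    exact isArtinian_of_injective (LocalizedModule.map q.primeCompl _)
      (LocalizedModule.map_injective _ _ (map_succ_mkQ_powTorsion_injective I N i))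

end locH

section RightExactness

variable {I : Ideal R} {S : Submonoid R} [IsNoetherianRing R]

namespace locH

lemma localizedModule_map_surjective {X Y : Type} [AddCommGroup X] [Module R X] [AddCommGroup Y]
    [Module R Y] {f : X →ₗ[R] Y} {i k : ℕ}
    (hk : I ^ k ≤ Module.annihilator R (Y ⧸ LinearMap.range f))
    (hker : Subsingleton (LocalizedModule S (locH I (i + 2) (LinearMap.ker f)))) :
    Function.Surjective (LocalizedModule.map S (map I (i + 1) f)) := by
  rw [← LinearMap.ker_rangeRestrict] at hker
  have := subsingleton_of_pow_le_annihilator hk i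
  have hrange := localizedModule_map_surjective_of_exact (S := S)
    (exact_map_connectingMap (i := i + 1) (.ker_subtype f.surjective_rangeRestrict)) hker
  have hsubtype := localizedModule_map_surjective_of_exact (S := S)
    (exact_map_map (I := I) (i := i + 1) (.subtype_mkQ (LinearMap.range f))) inferInstance
  have hcomp : map I (i + 1) f =
      map I (i + 1) (LinearMap.range f).subtype ∘ₗ map I (i + 1) f.rangeRestrict :=
    LinearMap.ext fun u => (map_map (LinearMap.range f).subtype f.rangeRestrict u).symm
  rw [hcomp]
  intro u
  obtain ⟨v, rfl⟩ := hsubtype u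
  obtain ⟨w, rfl⟩ := hrange v
  exact ⟨w, map_comp_localizedModule _ _ w⟩

variable {N : Type} [AddCommGroup N] [Module R N] [Module.Finite R N] {m : ℕ}

lemma smul_top_localizedModule_eq_top
    (h : ∀ i, m + 2 ≤ i → Subsingleton (LocalizedModule S (locH I i N))) :
    I • (⊤ : Submodule R (LocalizedModule S (locH I (m + 1) N))) = ⊤ := by
  obtain ⟨n, s, hs⟩ := Submodule.fg_iff_exists_fin_generating_family.1 (IsNoetherian.noetherian I)
  let f : (Fin n → N) →ₗ[R] N := ∑ j, s j • LinearMap.proj j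
  have hcoker : I ^ 1 ≤ Module.annihilator R (N ⧸ LinearMap.range f) := by
    rw [pow_one, ← hs, Submodule.span_le]
    rintro _ ⟨j, rfl⟩
    refine Module.mem_annihilator.2 <| (Submodule.mkQ_surjective _).forall.2 fun y =>
      (Submodule.Quotient.mk_eq_zero _).2 ⟨Pi.single j y, ?_⟩
    simp only [f, LinearMap.sum_apply, LinearMap.smul_apply, LinearMap.proj_apply,
      Pi.single_apply, smul_ite, smul_zero, Finset.sum_ite_eq', Finset.mem_univ, if_true]
  have hann : Module.annihilator R N ≤ Module.annihilator R (Fin n → N) := by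
    rw [Module.annihilator_pi]
    exact le_iInf fun _ => le_rfl
  refine eq_top_iff.2 fun u _ => ?_
  obtain ⟨v, rfl⟩ := localizedModule_map_surjective hcoker
    (subsingleton_localizedModule_of_annihilator_le h le_rfl <|
      hann.trans (LinearMap.annihilator_le_of_injective _ (Submodule.subtype_injective _))) u
  simp only [f, map_sum, map_smul, LinearMap.sum_apply, LinearMap.smul_apply]
  exact Submodule.sum_mem _ fun j _ =>
    Submodule.smul_mem_smul (hs ▸ Submodule.subset_span ⟨j, rfl⟩) Submodule.mem_top

lemma exists_mem_surjective_smul_localizedModule {q : Ideal R} [q.IsPrime]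
    (hq : q ∈ (I ⊔ Module.annihilator R N).minimalPrimes)
    (h : ∀ i, m + 2 ≤ i → Subsingleton (LocalizedModule q.primeCompl (locH I i N))) :
    ∃ x ∈ I, Function.Surjective
      (fun u : LocalizedModule q.primeCompl (locH I (m + 1) N) => x • u) := by
  have := isArtinian_localizedModule hq (i := m + 1) le_rfl
  exact exists_mem_surjective_smul_of_smul_top_eq_top (Localization.AtPrime q)
    (smul_top_localizedModule_eq_top h)

lemma subsingleton_localizedModule_quotSMulTop {x : R}
    (h : ∀ i, m + 2 ≤ i → Subsingleton (LocalizedModule S (locH I i N)))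
    (hx : Function.Surjective (fun u : LocalizedModule S (locH I (m + 1) N) => x • u)) {i : ℕ}
    (hi : m + 1 ≤ i) : Subsingleton (LocalizedModule S (locH I i (QuotSMulTop x N))) := by
  let g : N →ₗ[R] QuotSMulTop x N := Submodule.mkQ _
  have hg : Function.Surjective g := Submodule.mkQ_surjective _
  obtain rfl | hi := hi.eq_or_lt
  · have hcoker : I ^ 0 ≤ Module.annihilator R (QuotSMulTop x N ⧸ LinearMap.range g) := by
      rw [LinearMap.range_eq_top.2 hg, Module.annihilator_eq_top_iff.2 inferInstance]
      exact le_top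
    have hker := subsingleton_localizedModule_of_annihilator_le h le_rfl
      (LinearMap.annihilator_le_of_injective _ (Submodule.subtype_injective (LinearMap.ker g)))
    have hxg : x • g = 0 := LinearMap.ext fun y => (Submodule.Quotient.mk_eq_zero _).2
      (Submodule.smul_mem_pointwise_smul y x ⊤ Submodule.mem_top)
    have hxg' : x • LocalizedModule.map S (map I (m + 1) g) = 0 := by
      rw [← map_smul, ← map_smul, hxg, map_zero, map_zero]
    refine subsingleton_of_forall_eq 0 fun u => ?_
    obtain ⟨v, rfl⟩ := localizedModule_map_surjective hcoker hker u
    obtain ⟨w, rfl⟩ := hx v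
    exact (LinearMap.map_smul_of_tower _ x w).trans (LinearMap.congr_fun hxg' w)
  · exact subsingleton_localizedModule_of_annihilator_le h hi (g.annihilator_le_of_surjective hg)

end locH

end RightExactness

section HeightBound

lemma HasChain.le {α : Type*} [Preorder α] {n : ℕ} {a b : α} (h : HasChain n a b) : a ≤ b := by
  obtain ⟨l, rfl, rfl, -⟩ := h
  exact LTSeries.head_le_last l

lemma HasChain.exists_lt_and_mem {A : Type*} [CommRing A] [IsNoetherianRing A] {n : ℕ}
    {p q : PrimeSpectrum A} {x : A} (h : HasChain (n + 1) p q) (hx : x ∈ q.asIdeal) :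
    ∃ P, p < P ∧ x ∈ P.asIdeal ∧ HasChain n P q := by
  obtain ⟨l, rfl, rfl, hn⟩ := h
  obtain ⟨l', hx', hlen, hhead, hlast⟩ := PrimeSpectrum.exist_ltSeries_mem_one_of_mem_last l hx
  have hlen' : l'.length ≠ 0 := by lia
  have := NeZero.mk hlen'
  refine ⟨l' 1, hhead ▸ l'.strictMono Fin.one_pos', hx', l'.tail hlen',
    RelSeries.head_tail l' hlen', ?_, ?_⟩
  · rw [RelSeries.last_tail, hlast]
  · rw [RelSeries.tail_length]
    lia

variable {I : Ideal R}

lemma powTorsion_quotient_eq_bot {A : Type*} [CommRing A] {I p : Ideal A} [p.IsPrime]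
    (hI : ¬ I ≤ p) : powTorsion I (A ⧸ p) = ⊥ := by
  obtain ⟨a, haI, hap⟩ := SetLike.not_le_iff_exists.1 hI
  refine powTorsion_eq_bot_iff.2 fun y hy => ?_
  refine (mul_eq_zero.1 ((Algebra.smul_def a y).symm.trans (hy a haI))).resolve_left fun h => ?_
  exact hap (Ideal.Quotient.eq_zero_iff_mem.1 h)

lemma locH.nontrivial_localizedModule_zero {q : Ideal R} [q.IsPrime] (hI : I ≤ q) :
    Nontrivial (LocalizedModule q.primeCompl (locH I 0 (R ⧸ q))) := by
  have hone : (1 : R ⧸ q) ∈ powTorsion I (R ⧸ q) := ⟨1, fun a ha => by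
    rw [pow_one] at ha
    rw [Algebra.smul_def, mul_one]
    exact Ideal.Quotient.eq_zero_iff_mem.2 (hI ha)⟩
  obtain ⟨u, hu⟩ := (range_toModule I (R ⧸ q)).ge hone
  refine not_subsingleton_iff_nontrivial.1 fun h => ?_
  obtain ⟨s, hs, hsu⟩ := LocalizedModule.subsingleton_iff.1 h u
  have hsone := congrArg (toModule I (R ⧸ q)) hsu
  rw [map_smul, hu, map_zero, Algebra.smul_def, mul_one] at hsone
  exact hs (Ideal.Quotient.eq_zero_iff_mem.1 hsone)

lemma annihilator_quotSMulTop_quotient_le {A : Type*} [CommRing A] {p P : Ideal A} (hpP : p ≤ P)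
    {x : A} (hx : x ∈ P) : Module.annihilator A (QuotSMulTop x (A ⧸ p)) ≤ P := by
  let f : QuotSMulTop x (A ⧸ p) →ₗ[A] A ⧸ P := Submodule.liftQ _ (Submodule.factor hpP) <| by
    rintro _ ⟨y, -, rfl⟩
    obtain ⟨a, rfl⟩ := Ideal.Quotient.mk_surjective y
    exact (Submodule.Quotient.mk_eq_zero P).2 (P.mul_mem_right a hx)
  have hf : Function.Surjective f := Submodule.Quotient.mk_surjective P |>.forall.2 fun a =>
    ⟨Submodule.Quotient.mk (Ideal.Quotient.mk p a), rfl⟩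
  exact (f.annihilator_le_of_surjective hf).trans_eq Ideal.annihilator_quotient

variable [IsNoetherianRing R]

lemma not_hasChain_of_subsingleton_localizedModule {n : ℕ} {p q : PrimeSpectrum R}
    (hq : q.asIdeal ∈ (I ⊔ p.asIdeal).minimalPrimes)
    (h : ∀ i, n ≤ i →
      Subsingleton (LocalizedModule q.asIdeal.primeCompl (locH I i (R ⧸ p.asIdeal)))) :
    ¬ HasChain n p q := by
  have hIq : I ≤ q.asIdeal := le_sup_left.trans hq.1.2
  induction n generalizing p with
  | zero =>
    have hann : Module.annihilator R (R ⧸ p.asIdeal) ≤ Module.annihilator R (R ⧸ q.asIdeal) := by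
      rw [Ideal.annihilator_quotient, Ideal.annihilator_quotient]
      exact le_sup_right.trans hq.1.2
    exact absurd (locH.subsingleton_localizedModule_of_annihilator_le h le_rfl hann)
      (not_subsingleton_iff_nontrivial.2 (locH.nontrivial_localizedModule_zero hIq))
  | succ n ih =>
    intro hchain
    by_cases hIp : I ≤ p.asIdeal
    · obtain ⟨P, hpP, -, hPq⟩ := hchain.exists_lt_and_mem q.asIdeal.zero_mem
      have hqp : q ≤ p := hq.2 ⟨p.2, sup_le hIp le_rfl⟩ (le_sup_right.trans hq.1.2)
      exact (hpP.trans_le (hPq.le.trans hqp)).false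
    cases n with
    | zero =>
      refine ih hq (fun i _ => ?_) (hchain.mono zero_le_one)
      obtain rfl | hi := i.eq_zero_or_pos
      · have := locH.subsingleton_zero_of_powTorsion_eq_bot (powTorsion_quotient_eq_bot hIp)
        infer_instance
      · exact h i hi
    | succ m =>
      obtain ⟨x, hxI, hx⟩ := locH.exists_mem_surjective_smul_localizedModule
        (Ideal.annihilator_quotient (I := p.asIdeal) |>.symm ▸ hq) h
      obtain ⟨P, hpP, hxP, hPq⟩ := hchain.exists_lt_and_mem (hIq hxI)
      refine ih (p := P) ⟨⟨q.2, sup_le hIq hPq.le⟩, fun Q hQ hQq => hq.2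
        ⟨hQ.1, (sup_le_sup_left hpP.le I).trans hQ.2⟩ hQq⟩ (fun i hi => ?_) hPq
      refine locH.subsingleton_localizedModule_of_annihilator_le
        (M := QuotSMulTop x (R ⧸ p.asIdeal))
        (fun i hi => locH.subsingleton_localizedModule_quotSMulTop h hx hi) hi ?_
      rw [Ideal.annihilator_quotient]
      exact annihilator_quotSMulTop_quotient_le hpP.le hxP

end HeightBound

section QuotientSpectrum

variable {A : Type*} [CommRing A]

lemma natCast_le_height_iff_hasChain_comap {n : ℕ} {p : PrimeSpectrum A}
    {q : PrimeSpectrum (A ⧸ p.asIdeal)} :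
    (n : ℕ∞) ≤ Order.height q ↔
      HasChain n p (PrimeSpectrum.comap (Ideal.Quotient.mk p.asIdeal) q) := by
  let e := p.asIdeal.primeSpectrumQuotientOrderIsoZeroLocus
  constructor
  · intro h
    obtain ⟨l, rfl, rfl⟩ := Order.exists_series_of_le_height q h
    have he : StrictMono fun x => (e x : PrimeSpectrum A) := fun _ _ hxy => e.strictMono hxy
    have hl : HasChain l.length (e l.head : PrimeSpectrum A) (e l.last) :=
      ⟨l.map _ he, LTSeries.head_map l _ he, LTSeries.last_map l _ he, le_rfl⟩
    exact hl.of_le (e l.head).2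
  · rintro ⟨l, hhead, hlast, hn⟩
    have hmem : ∀ i, l i ∈ PrimeSpectrum.zeroLocus (p.asIdeal : Set A) := fun i =>
      hhead.ge.trans (LTSeries.head_le l i)
    let l' : LTSeries (PrimeSpectrum (A ⧸ p.asIdeal)) :=
      ⟨l.length, fun i => e.symm ⟨l i, hmem i⟩, fun i => e.symm.strictMono (l.step i)⟩
    have hlast' : l'.last = q := (e.symm_apply_eq).2 (Subtype.ext hlast)
    calc (n : ℕ∞) ≤ l'.length := by exact_mod_cast hn
      _ ≤ Order.height l'.last := Order.length_le_height_last
      _ = Order.height q := by rw [hlast']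

lemma sup_ne_top_of_le_jacobson_bot {I p : Ideal A} (hI : I ≤ (⊥ : Ideal A).jacobson)
    (hp : p ≠ ⊤) : I ⊔ p ≠ ⊤ := by
  obtain ⟨m, hm, hpm⟩ := Ideal.exists_le_maximal p hp
  exact ne_top_of_le_ne_top hm.ne_top (sup_le (hI.trans (sInf_le ⟨bot_le, hm⟩)) hpm)

lemma exists_mem_minimalPrimes_sup {I : Ideal A} {p : PrimeSpectrum A} (hp : I ⊔ p.asIdeal ≠ ⊤) :
    ∃ q : PrimeSpectrum A, q.asIdeal ∈ (I ⊔ p.asIdeal).minimalPrimes := by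
  obtain ⟨q, hq⟩ := Ideal.nonempty_minimalPrimes hp
  exact ⟨⟨q, hq.1.1⟩, hq⟩

end QuotientSpectrum

section RelativeGCM

variable {I : Ideal R} {c : ℕ} {M : Type} [AddCommGroup M] [Module R M]

lemma IsRelGCM.isFinDim (h : IsRelGCM I M) (hc : IsCd I M c) (hpos : 0 < c) :
    IsFinDim I M c := by
  obtain h | ⟨c', hc', hf⟩ := h
  · exact absurd (h c hpos) (not_subsingleton_iff_nontrivial.2 hc.1)
  obtain hlt | rfl | hlt := lt_trichotomy c c'
  · exact absurd (hc.2 c' hlt) (not_subsingleton_iff_nontrivial.2 hc'.1)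
  · exact hf
  · exact absurd (hc'.2 c hlt) (not_subsingleton_iff_nontrivial.2 hc.1)

lemma IsFinDim.finDimNE_eq (h : IsFinDim I M c) : finDimNE I M = c := by
  refine le_antisymm (sInf_le ⟨c, rfl, h.2⟩) (le_sInf ?_)
  rintro _ ⟨k, rfl, hk⟩
  exact_mod_cast not_lt.1 fun hlt => hk (h.1 k hlt)

variable [IsNoetherianRing R]

lemma isLocPowTorsion_locH_of_finite {i : ℕ} [Module.Finite R (locH I i M)] (S : Submonoid R) :
    IsLocPowTorsion S I (locH I i M) := by
  obtain ⟨n, hn⟩ := exists_pow_le_annihilator_powTorsion I (locH I i M)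
  have htop : ∀ x : locH I i M, x ∈ powTorsion I (locH I i M) :=
    fun x => mem_powTorsion.2 (locH.exists_pow_smul_eq_zero x)
  refine ⟨n, fun a ha x => ⟨1, S.one_mem, ?_⟩⟩
  rw [one_smul]
  exact congrArg Subtype.val (Module.mem_annihilator.1 (hn ha) ⟨x, htop x⟩)

lemma lambdaNE_le_idealHeight {p : PrimeSpectrum R} (hp : IsAssociatedPrime p.asIdeal M)
    (hIp : ¬ I ≤ p.asIdeal) :
    lambdaNE I M ≤ idealHeight (I.map (Ideal.Quotient.mk p.asIdeal)) := by
  have hdepth : depthE (Localization.AtPrime p.asIdeal)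
      (LocalizedModule p.asIdeal.primeCompl M) ≤ 0 :=
    sInf_le ⟨0, Nat.cast_zero.symm, (nontrivial_extH_maximalIdeal_zero_iff p.asIdeal).2 hp⟩
  calc lambdaNE I M ≤ depthE (Localization.AtPrime p.asIdeal)
          (LocalizedModule p.asIdeal.primeCompl M) +
        idealHeight (I.map (Ideal.Quotient.mk p.asIdeal)) := sInf_le ⟨p, hIp, rfl⟩
    _ ≤ 0 + idealHeight (I.map (Ideal.Quotient.mk p.asIdeal)) := by gcongr
    _ = _ := zero_add _

variable [Module.Finite R M]

lemma natCast_le_lambdaNE (h : ∀ i < c, Module.Finite R (locH I i M)) :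
    (c : ℕ∞) ≤ lambdaNE I M := by
  have add_sInf_le {s t : Set ℕ∞} (hst : ∀ a ∈ s, ∀ b ∈ t, (c : ℕ∞) ≤ a + b) :
      (c : ℕ∞) ≤ sInf s + sInf t := by
    obtain rfl | hs := s.eq_empty_or_nonempty
    · simp
    obtain rfl | ht := t.eq_empty_or_nonempty
    · simp
    exact hst _ (csInf_mem hs) _ (csInf_mem ht)
  refine le_sInf ?_
  rintro _ ⟨p, hIp, rfl⟩
  refine add_sInf_le ?_
  rintro _ ⟨k, rfl, hk⟩ _ ⟨q, hq, rfl⟩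
  have hpq : p ≤ PrimeSpectrum.comap (Ideal.Quotient.mk p.asIdeal) q :=
    (p.asIdeal.primeSpectrumQuotientOrderIsoZeroLocus q).2
  have hchain := hasChain_of_nontrivial_extH hIp (Ideal.map_le_iff_le_comap.1 hq) hpq hk
    fun i hi => have := h i hi; isLocPowTorsion_locH_of_finite _
  calc (c : ℕ∞) ≤ (k + (c - k) : ℕ) := by exact_mod_cast le_add_tsub
    _ = k + (c - k : ℕ) := Nat.cast_add _ _
    _ ≤ k + Order.height q := by
      gcongr
      exact natCast_le_height_iff_hasChain_comap.2 hchain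

lemma exists_isAssociatedPrime_not_le_of_nontrivial_locH (hpos : 0 < c)
    (h : Nontrivial (locH I c M)) : ∃ p, IsAssociatedPrime p M ∧ ¬ I ≤ p ∧ I ⊔ p ≠ ⊤ := by
  obtain ⟨j, rfl⟩ := Nat.exists_eq_add_one.2 hpos
  obtain ⟨q, hq⟩ := associatedPrimes.nonempty R (locH I (j + 1) M)
  have := hq.isPrime
  obtain ⟨x, hx⟩ := exists_forall_mem_iff_of_isAssociatedPrime hq
  have hIq : I ≤ q := fun a ha => by
    obtain ⟨n, hn⟩ := locH.exists_pow_smul_eq_zero x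
    exact Ideal.IsPrime.mem_of_pow_mem ‹_› n ((hx _).2 (hn _ (Ideal.pow_mem_pow ha n)))
  by_contra! hcon
  have hass : ∀ P, IsAssociatedPrime P M → P ≤ q → I ≤ P := fun P hP hPq => by
    by_contra hIP
    exact ne_top_of_le_ne_top ‹q.IsPrime›.ne_top (sup_le hIq hPq) (hcon P hP hIP)
  obtain ⟨t, htq, n, hn⟩ := exists_notMem_forall_mul_mem_annihilator hass
  let f := LinearMap.lsmul R M t
  have hrange : I ^ n ≤ Module.annihilator R (LinearMap.range f) := by
    refine fun a ha => Module.mem_annihilator.2 ?_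
    rintro ⟨_, y, rfl⟩
    exact Subtype.ext ((mul_smul a t y).symm.trans (Module.mem_annihilator.1 (hn a ha) y))
  have := locH.subsingleton_of_pow_le_annihilator hrange j
  refine htq ((hx t).2 ?_)
  calc t • x = locH.map I (j + 1) f x := (locH.map_lsmul t x).symm
    _ = locH.map I (j + 1) (LinearMap.range f).subtype
          (locH.map I (j + 1) f.rangeRestrict x) :=
        (locH.map_map (LinearMap.range f).subtype f.rangeRestrict x).symm
    _ = 0 := by rw [Subsingleton.elim (locH.map I (j + 1) f.rangeRestrict x) 0, map_zero]

lemma locH.subsingleton_quotient_of_isAssociatedPrime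
    (h : ∀ i, c < i → Subsingleton (locH I i M)) {p : Ideal R} (hp : IsAssociatedPrime p M) {i : ℕ}
    (hi : c < i) : Subsingleton (locH I i (R ⧸ p)) := by
  have hann : Module.annihilator R M ≤ Module.annihilator R (R ⧸ p) := by
    rw [Ideal.annihilator_quotient, ← Submodule.annihilator_top]
    exact hp.annihilator_le
  exact subsingleton_localizedModule_bot_iff.1 <| subsingleton_localizedModule_of_annihilator_le
    (c := c + 1) (fun i hi => subsingleton_localizedModule_bot_iff.2 (h i hi)) hi hann

lemma isCd_quotient_of_isAssociatedPrime (hfin : ∀ i < c, Module.Finite R (locH I i M))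
    (hvan : ∀ i, c < i → Subsingleton (locH I i M)) {p : PrimeSpectrum R}
    (hp : IsAssociatedPrime p.asIdeal M) (hIp : ¬ I ≤ p.asIdeal) (hsup : I ⊔ p.asIdeal ≠ ⊤) :
    IsCd I (R ⧸ p.asIdeal) c := by
  have hvan' := fun i => locH.subsingleton_quotient_of_isAssociatedPrime hvan hp (i := i)
  refine ⟨not_subsingleton_iff_nontrivial.1 fun hc => ?_, hvan'⟩
  obtain ⟨q, hq⟩ := exists_mem_minimalPrimes_sup hsup
  refine not_hasChain_of_subsingleton_localizedModule hq (n := c) (fun i hi => ?_) ?_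
  · have : Subsingleton (locH I i (R ⧸ p.asIdeal)) := by
      obtain rfl | hi := hi.eq_or_lt
      exacts [hc, hvan' i hi]
    infer_instance
  · exact hasChain_of_isAssociatedPrime hp hIp (le_sup_left.trans hq.1.2)
      (le_sup_right.trans hq.1.2) fun i hi => have := hfin i hi; isLocPowTorsion_locH_of_finite _

lemma idealHeight_map_quotient_le {p : PrimeSpectrum R}
    (hvan : ∀ i, c < i → Subsingleton (locH I i (R ⧸ p.asIdeal))) (hsup : I ⊔ p.asIdeal ≠ ⊤) :
    idealHeight (I.map (Ideal.Quotient.mk p.asIdeal)) ≤ c := by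
  obtain ⟨q, hq⟩ := exists_mem_minimalPrimes_sup hsup
  obtain ⟨q', rfl⟩ : ∃ q', PrimeSpectrum.comap (Ideal.Quotient.mk p.asIdeal) q' = q :=
    let e := p.asIdeal.primeSpectrumQuotientOrderIsoZeroLocus
    let q₀ : PrimeSpectrum.zeroLocus (p.asIdeal : Set R) := ⟨q, le_sup_right.trans hq.1.2⟩
    ⟨e.symm q₀, congrArg Subtype.val (e.apply_symm_apply q₀)⟩
  have hchain : ¬ HasChain (c + 1) p (PrimeSpectrum.comap (Ideal.Quotient.mk p.asIdeal) q') :=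
    not_hasChain_of_subsingleton_localizedModule hq fun i hi =>
      have := hvan i hi; inferInstance
  have hheight : Order.height q' ≤ c := by
    rw [← natCast_le_height_iff_hasChain_comap, not_le, Nat.cast_add, Nat.cast_one] at hchain
    exact ENat.lt_natCast_add_one_iff.1 hchain
  calc idealHeight (I.map (Ideal.Quotient.mk p.asIdeal)) ≤ Order.height q' :=
        sInf_le ⟨q', Ideal.map_le_iff_le_comap.2 (le_sup_left.trans hq.1.2), rfl⟩
    _ ≤ c := hheight

end RelativeGCM

theorem lemma_3_2_general [IsNoetherianRing R] (I : Ideal R)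
    (M : Type) [AddCommGroup M] [Module R M] [Module.Finite R M]
    (hgcm : IsRelGCM I M) (c : ℕ) (hc : IsCd I M c) (hpos : 0 < c) :
    finDimNE I M = lambdaNE I M ∧
      ∀ p : Ideal R, IsAssociatedPrime p M → ¬ I ≤ p → I ⊔ p ≠ ⊤ → IsCd I (R ⧸ p) c := by
  have hf : IsFinDim I M c := hgcm.isFinDim hc hpos
  refine ⟨hf.finDimNE_eq.trans (le_antisymm (natCast_le_lambdaNE hf.1) ?_), fun p hp hIp hsup =>
    isCd_quotient_of_isAssociatedPrime hf.1 hc.2 (p := ⟨p, hp.isPrime⟩) hp hIp hsup⟩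
  obtain ⟨p, hp, hIp, hsup⟩ := exists_isAssociatedPrime_not_le_of_nontrivial_locH hpos hc.1
  let P : PrimeSpectrum R := ⟨p, hp.isPrime⟩
  calc lambdaNE I M ≤ idealHeight (I.map (Ideal.Quotient.mk p)) :=
        lambdaNE_le_idealHeight (p := P) hp hIp
    _ ≤ c := idealHeight_map_quotient_le (p := P)
        (fun _ => locH.subsingleton_quotient_of_isAssociatedPrime hc.2 hp) hsup

/-- **Lemma 3.2.** Suppose `I` is contained in the Jacobson radical of `R` and `M` is an
`I`-relative generalized Cohen-Macaulay module with `c := cd(I,M) > 0`. Then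
`f_I(M) = λ_I(M)`, and `cd(I, R/p) = c` for every associated prime `p` of `M` outside
`V(I)`. -/
theorem lemma_3_2 [IsNoetherianRing R] (I : Ideal R) (hjac : I ≤ (⊥ : Ideal R).jacobson)
    (M : Type) [AddCommGroup M] [Module R M] [Module.Finite R M]
    (hgcm : IsRelGCM I M) (c : ℕ) (hc : IsCd I M c) (hpos : 0 < c) :
    finDimNE I M = lambdaNE I M ∧
      ∀ p : Ideal R, IsAssociatedPrime p M → ¬ I ≤ p → IsCd I (R ⧸ p) c :=
  (lemma_3_2_general I M hgcm c hc hpos).imp_right fun h p hp hIp =>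
    h p hp hIp (sup_ne_top_of_le_jacobson_bot hjac hp.isPrime.ne_top)
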